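/- arXiv:1410.2639 — 3 statements merged into one kernel-verified Lean document; each statement's English description precedes it below -/
import Mathlib

section
/- Let f : ℝ → ℝ be a measurable probability density (f ≥ 0 and ∫_ℝ f(z) dz = 1) with cumulative distribution function F(y) = ∫_{−∞}^{y} f(z) dz, and fix an integer N ≥ 2 and T > 1. For data x = (x₁, …, x_N) ∈ ℝᴺ define the normalizing integral A(x) = ∫₀^∞ ∫_ℝ σ^{−(N+1)} ∏_{i=1}^{N} f((x_i − μ)/σ) dμ dσ and the predictive tail integral B(y, x) = ∫₀^∞ ∫_ℝ σ^{−(N+1)} ∏_{i=1}^{N} f((x_i − μ)/σ) · (1 − F((y − μ)/σ)) dμ dσ, corresponding to the improper prior dμ dσ/σ on the location–scale parameters. Assume that for almost every data vector x (with respect to the i.i.d. sampling law below) one has 0 < A(x) < ∞ and the map y ↦ B(y, x)/A(x) is continuous and strictly decreasing where it takes values in (0,1), tending to 1 as y → −∞ and to 0 as y → +∞, and let x_T(x) be the unique solution of B(x_T(x), x)/A(x) = 1/T, chosen measurably in x. Then this Bayesian predictor is probability-preserving at every parameter: for every μ* ∈ ℝ and σ* > 0, if X₁, …, X_N, X_{N+1}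 are i.i.d. with density x ↦ σ*^{−1} f((x − μ*)/σ*), then P(X_{N+1} > x_T(X₁, …, X_N)) = 1/T. -/
open MeasureTheory Set Filter

/-- The law of a single observation from the location–scale family generated by a density `f`:
the measure on `ℝ` with density `x ↦ σ⁻¹ f((x - μ)/σ)` with respect to Lebesgue measure. -/
noncomputable def locScaleLaw (f : ℝ → ℝ) (μ σ : ℝ) : Measure ℝ :=
  volume.withDensity fun x => ENNReal.ofReal (σ⁻¹ * f ((x - μ) / σ))

open scoped ENNReal

/-!
The affine group acts on samples by `xᵢ ↦ μ + σ xᵢ`, carrying the standard law to the law at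
`(μ, σ)`. Under this action the prior `dμ dσ / σ` is only multiplied by a constant, which cancels in
`B / A`; hence the predictive quantile is equivariant, and the probability that the next observation
exceeds it is the same at all parameters.

To find this common value `c`, integrate the exceedance probability over all parameters against the
prior, restricted to a window of samples that almost every orbit visits for a set of parameters of
prior measure one. This gives `c`. By Tonelli's theorem it is also the integral of `B(q(x), x)` over
the samples `x` in the window, where `q` is the quantile at level `α`; since `B(q(x), x) = α A(x)`,
undoing the exchange gives `α`.
-/

section ProductMeasures

variable {ι : Type*} [Fintype ι] {X : ι → Type*} [∀ i, MeasurableSpace (X i)]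
  {μ : ∀ i, Measure (X i)} [∀ i, SigmaFinite (μ i)]

theorem lmarginal_prod_eq [DecidableEq ι] {g : ∀ i, X i → ℝ≥0∞} (hg : ∀ i, Measurable (g i))
    (s : Finset ι) (x : ∀ i, X i) :
    (∫⋯∫⁻_s, (fun y => ∏ i, g i (y i)) ∂μ) x =
      (∏ i ∈ s, ∫⁻ t, g i t ∂μ i) * ∏ i ∈ sᶜ, g i (x i) := by
  induction s using Finset.induction_on generalizing x with
  | empty => simp
  | insert j s hj ih =>
    have hjc : j ∈ sᶜ := Finset.mem_compl.2 hj
    have split_update (t : X j) : ∏ i ∈ sᶜ, g i (Function.update x j t i) =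
        g j t * ∏ i ∈ (insert j s)ᶜ, g i (x i) := by
      rw [← Finset.mul_prod_erase _ _ hjc, Function.update_self, Finset.compl_insert]
      refine congrArg _ (Finset.prod_congr rfl fun i hi => ?_)
      rw [Function.update_of_ne (Finset.ne_of_mem_erase hi)]
    rw [lmarginal_insert _ (by fun_prop) hj]
    simp_rw [ih, split_update]
    rw [lintegral_const_mul _ (by fun_prop), lintegral_mul_const _ (hg j),
      Finset.prod_insert hj]
    ring

theorem lintegral_pi_prod_eq_prod_lintegral {g : ∀ i, X i → ℝ≥0∞}
    (hg : ∀ i, Measurable (g i)) :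
    ∫⁻ x, ∏ i, g i (x i) ∂Measure.pi μ = ∏ i, ∫⁻ t, g i t ∂μ i := by
  classical
  by_cases hX : Nonempty (∀ i, X i)
  · obtain ⟨x⟩ := hX
    rw [lintegral_eq_lmarginal_univ x, lmarginal_prod_eq hg]
    simp
  · obtain ⟨i, hi⟩ := not_forall.1 (mt Classical.nonempty_pi.2 hX)
    rw [not_nonempty_iff] at hX hi
    rw [lintegral_of_isEmpty, Finset.prod_eq_zero (Finset.mem_univ i) (lintegral_of_isEmpty _ _)]

theorem pi_withDensity {g : ∀ i, X i → ℝ≥0∞} (hg : ∀ i, Measurable (g i))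
    [∀ i, SigmaFinite ((μ i).withDensity (g i))] :
    (Measure.pi fun i => (μ i).withDensity (g i)) =
      (Measure.pi μ).withDensity fun x => ∏ i, g i (x i) := by
  refine Measure.pi_eq fun s hs => ?_
  have prod_indicator (x : ∀ i, X i) : (univ.pi s).indicator (fun y => ∏ i, g i (y i)) x =
      ∏ i, (s i).indicator (g i) (x i) := by
    by_cases hx : x ∈ univ.pi s
    · rw [indicator_of_mem hx]
      exact Finset.prod_congr rfl fun i _ => (indicator_of_mem (hx i (mem_univ i)) _).symm
    · obtain ⟨i, hi⟩ : ∃ i, x i ∉ s i := by simpa [Set.mem_pi] using hx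
      rw [indicator_of_notMem hx,
        Finset.prod_eq_zero (Finset.mem_univ i) (indicator_of_notMem hi _)]
  simp_rw [withDensity_apply _ (MeasurableSet.univ_pi hs), withDensity_apply _ (hs _),
    ← lintegral_indicator (MeasurableSet.univ_pi hs), ← lintegral_indicator (hs _), prod_indicator]
  exact lintegral_pi_prod_eq_prod_lintegral fun i => (hg i).indicator (hs i)

end ProductMeasures

theorem pi_lt_last_eq_lintegral {n : ℕ} (ν : Measure ℝ) [SigmaFinite ν] {q : (Fin n → ℝ) → ℝ}
    (hq : Measurable q) :
    (Measure.pi fun _ : Fin (n + 1) => ν) {z | q (fun i => z i.castSucc) < z (Fin.last n)} =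
      ∫⁻ x, ν (Ioi (q x)) ∂Measure.pi fun _ : Fin n => ν := by
  have hmp := measurePreserving_piFinSuccAbove (fun _ : Fin (n + 1) => ν) (Fin.last n)
  have hms : MeasurableSet {r : ℝ × (Fin n → ℝ) | q r.2 < r.1} :=
    measurableSet_lt (by fun_prop) (by fun_prop)
  have hpre : {z : Fin (n + 1) → ℝ | q (fun i => z i.castSucc) < z (Fin.last n)} =
      MeasurableEquiv.piFinSuccAbove (fun _ => ℝ) (Fin.last n) ⁻¹' {r | q r.2 < r.1} := by
    simp [MeasurableEquiv.piFinSuccAbove, Fin.insertNthEquiv, Fin.init_def]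
  rw [hpre, hmp.measure_preimage hms.nullMeasurableSet, Measure.prod_apply_symm hms]
  rfl

theorem ae_apply_ne_apply {ι : Type*} [Fintype ι] {i j : ι} (hij : i ≠ j) :
    ∀ᵐ x : ι → ℝ, x i ≠ x j := by
  classical
  let diff : (ι → ℝ) →ₗ[ℝ] ℝ :=
    LinearMap.proj (R := ℝ) (φ := fun _ => ℝ) i - LinearMap.proj (R := ℝ) (φ := fun _ => ℝ) j
  have hker : diff.ker ≠ ⊤ := fun h => by
    have : Pi.single i (1 : ℝ) ∈ diff.ker := h ▸ Submodule.mem_top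
    simp [diff, hij.symm] at this
  refine measure_mono_null (fun x hx => ?_) (Measure.addHaar_submodule volume diff.ker hker)
  simpa [diff, sub_eq_zero] using hx

theorem map_exp_volume :
    (volume : Measure ℝ).map Real.exp =
      (volume.restrict (Ioi 0)).withDensity fun σ => ENNReal.ofReal σ⁻¹ := by
  refine Measure.ext_of_lintegral _ fun h hh => ?_
  have change_var := lintegral_image_eq_lintegral_abs_deriv_mul MeasurableSet.univ
    (fun t _ => (Real.hasDerivAt_exp t).hasDerivWithinAt) Real.exp_injective.injOn
    (fun σ => ENNReal.ofReal σ⁻¹ * h σ)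
  rw [image_univ, Real.range_exp, setLIntegral_univ] at change_var
  rw [lintegral_map hh Real.measurable_exp,
    lintegral_withDensity_eq_lintegral_mul _ (by fun_prop) hh]
  refine Eq.trans (lintegral_congr fun t => ?_) change_var.symm
  rw [← mul_assoc, ← ENNReal.ofReal_mul (abs_nonneg _), Real.abs_exp,
    mul_inv_cancel₀ (Real.exp_ne_zero t), ENNReal.ofReal_one, one_mul]

theorem map_affine_volume (a : ℝ) {b : ℝ} (hb : b ≠ 0) :
    (volume : Measure ℝ).map (fun t => a + b * t) = ENNReal.ofReal |b⁻¹| • volume := by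
  change Measure.map ((a + ·) ∘ (b * ·)) volume = _
  rw [← Measure.map_map (by fun_prop) (by fun_prop), Real.map_volume_mul_left hb,
    Measure.map_smul, map_add_left_eq_self]

@[fun_prop]
theorem measurable_measure_Ioi {Ω : Type*} [MeasurableSpace Ω] (ν : Measure ℝ) {g : Ω → ℝ}
    (hg : Measurable g) : Measurable fun ω => ν (Ioi (g ω)) :=
  (Antitone.measurable fun _ _ hab => measure_mono (Ioi_subset_Ioi hab) :
    Measurable fun y => ν (Ioi y)).comp hg

theorem eq_iff_eq_of_strictAntiOn_preimage {α β : Type*} [LinearOrder α] [Preorder β] {g : α → β}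
    {s : Set β} {c : β} {a : α} (hg : StrictAntiOn g (g ⁻¹' s)) (hc : c ∈ s) (ha : g a = c)
    (y : α) : g y = c ↔ y = a := by
  refine ⟨fun hy => hg.injOn ?_ ?_ (hy.trans ha.symm), fun hy => hy ▸ ha⟩
  · rwa [mem_preimage, hy]
  · rwa [mem_preimage, ha]

section Law

variable {ι : Type*} [Fintype ι] {f : ℝ → ℝ}

instance (μ σ : ℝ) : SigmaFinite (locScaleLaw f μ σ) :=
  SigmaFinite.withDensity_ofReal _

theorem locScaleLaw_eq_map (hf : Measurable f) (μ : ℝ) {σ : ℝ} (hσ : 0 < σ) :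
    locScaleLaw f μ σ = (locScaleLaw f 0 1).map fun t => μ + σ * t := by
  refine Measure.ext_of_lintegral _ fun h hh => ?_
  let k : ℝ → ℝ≥0∞ := fun x => ENNReal.ofReal (f ((x - μ) / σ)) * h x
  have hk : Measurable k := by fun_prop
  calc ∫⁻ x, h x ∂locScaleLaw f μ σ
      = ∫⁻ x, ENNReal.ofReal σ⁻¹ * k x := by
        rw [locScaleLaw, lintegral_withDensity_eq_lintegral_mul _ (by fun_prop) hh]
        simp only [k, Pi.mul_apply, ENNReal.ofReal_mul (inv_nonneg.2 hσ.le), mul_assoc]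
    _ = ∫⁻ t, k (μ + σ * t) := by
        rw [← lintegral_map hk (by fun_prop), map_affine_volume μ hσ.ne', lintegral_smul_measure,
          lintegral_const_mul _ hk, abs_of_pos (inv_pos.2 hσ), smul_eq_mul]
    _ = ∫⁻ x, h x ∂(locScaleLaw f 0 1).map fun t => μ + σ * t := by
        rw [lintegral_map hh (by fun_prop), locScaleLaw,
          lintegral_withDensity_eq_lintegral_mul _ (by fun_prop) (by fun_prop)]
        simp [k, hσ.ne']

theorem locScaleLaw_Ioi (hf : Measurable f) (μ : ℝ) {σ : ℝ} (hσ : 0 < σ) (y : ℝ) :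
    locScaleLaw f μ σ (Ioi y) = locScaleLaw f 0 1 (Ioi ((y - μ) / σ)) := by
  rw [locScaleLaw_eq_map hf μ hσ, Measure.map_apply (by fun_prop) measurableSet_Ioi]
  congr 1
  ext t
  simp only [div_lt_iff₀' hσ, sub_lt_iff_lt_add', mem_preimage, mem_Ioi]

/-- The action `xᵢ ↦ μ + σ xᵢ` of the parameter `p = (σ, μ)` on samples. -/
def affineAct {ι : Type*} (p : ℝ × ℝ) (x : ι → ℝ) : ι → ℝ := fun i => p.2 + p.1 * x i

@[fun_prop]
theorem measurable_affineAct {Ω ι : Type*} [MeasurableSpace Ω] {p : Ω → ℝ × ℝ} {x : Ω → ι → ℝ}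
    (hp : Measurable p) (hx : Measurable x) : Measurable fun ω => affineAct (p ω) (x ω) := by
  unfold affineAct
  fun_prop

theorem pi_locScaleLaw_eq_map (hf : Measurable f) {p : ℝ × ℝ} (hp : 0 < p.1) :
    (Measure.pi fun _ : ι => locScaleLaw f p.2 p.1) =
      (Measure.pi fun _ : ι => locScaleLaw f 0 1).map (affineAct p) := by
  have : SigmaFinite ((locScaleLaw f 0 1).map fun t => p.2 + p.1 * t) :=
    locScaleLaw_eq_map hf p.2 hp ▸ inferInstance
  rw [locScaleLaw_eq_map hf p.2 hp,
    ← Measure.pi_map_pi (f := fun _ t => p.2 + p.1 * t) fun _ => by fun_prop]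
  rfl

/-- The joint density of an i.i.d. sample `x` at the parameter `p = (σ, μ)`. -/
noncomputable def locScaleLikelihood (f : ℝ → ℝ) (x : ι → ℝ) (p : ℝ × ℝ) : ℝ≥0∞ :=
  ∏ i, ENNReal.ofReal (p.1⁻¹ * f ((x i - p.2) / p.1))

@[fun_prop]
theorem measurable_locScaleLikelihood {Ω : Type*} [MeasurableSpace Ω] (hf : Measurable f)
    {x : Ω → ι → ℝ} {p : Ω → ℝ × ℝ} (hx : Measurable x) (hp : Measurable p) :
    Measurable fun ω => locScaleLikelihood f (x ω) (p ω) := by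
  unfold locScaleLikelihood
  fun_prop

theorem pi_locScaleLaw_eq_withDensity (hf : Measurable f) (p : ℝ × ℝ) :
    (Measure.pi fun _ : ι => locScaleLaw f p.2 p.1) =
      volume.withDensity fun x => locScaleLikelihood f x p :=
  pi_withDensity fun _ => by fun_prop

theorem ae_pi_locScaleLaw_apply_ne_apply (hf : Measurable f) (μ σ : ℝ) {i j : ι} (hij : i ≠ j) :
    ∀ᵐ x ∂Measure.pi fun _ : ι => locScaleLaw f μ σ, x i ≠ x j := by
  rw [pi_locScaleLaw_eq_withDensity hf (σ, μ)]
  exact (withDensity_absolutelyContinuous _ _).ae_le (ae_apply_ne_apply hij)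

theorem locScaleLikelihood_affineAct {g : ℝ × ℝ} (hg : 0 < g.1) (x : ι → ℝ) (p : ℝ × ℝ) :
    locScaleLikelihood f (affineAct g x) (g.1 * p.1, g.2 + g.1 * p.2) =
      ENNReal.ofReal g.1⁻¹ ^ Fintype.card ι * locScaleLikelihood f x p := by
  simp_rw [locScaleLikelihood, affineAct, add_sub_add_left_eq_sub, ← mul_sub,
    mul_div_mul_left _ _ hg.ne', mul_inv, mul_assoc, ENNReal.ofReal_mul (inv_nonneg.2 hg.le),
    Finset.prod_mul_distrib, Finset.prod_const, Finset.card_univ]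

end Law

section Prior

/-- The improper prior `dμ dσ / σ` on the parameters `p = (σ, μ)`. -/
noncomputable def locScalePrior : Measure (ℝ × ℝ) :=
  ((volume.restrict (Ioi 0)).withDensity fun σ => ENNReal.ofReal σ⁻¹).prod volume

instance : SFinite locScalePrior := by
  unfold locScalePrior; infer_instance

theorem locScalePrior_eq_withDensity :
    locScalePrior =
      (volume.restrict (Ioi 0 ×ˢ univ)).withDensity fun p => ENNReal.ofReal p.1⁻¹ := by
  rw [locScalePrior, prod_withDensity_left (by fun_prop), Measure.volume_eq_prod,
    ← Measure.prod_restrict, Measure.restrict_univ]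

theorem locScalePrior_eq_map_exp :
    locScalePrior = (volume : Measure (ℝ × ℝ)).map (Prod.map Real.exp id) := by
  rw [locScalePrior, ← map_exp_volume, Measure.volume_eq_prod,
    ← Measure.map_prod_map _ _ Real.measurable_exp measurable_id, Measure.map_id]

theorem ae_locScalePrior_scale_pos : ∀ᵐ p ∂locScalePrior, 0 < p.1 := by
  rw [locScalePrior_eq_map_exp,
    ae_map_iff (by fun_prop) (measurableSet_lt (by fun_prop) (by fun_prop))]
  exact Eventually.of_forall fun p => Real.exp_pos p.1

theorem locScalePrior_eq_smul_map {g : ℝ × ℝ} (hg : 0 < g.1) :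
    locScalePrior =
      ENNReal.ofReal g.1 • locScalePrior.map fun p => (g.1 * p.1, g.2 + g.1 * p.2) := by
  have exp_dilation : (g.1 * ·) ∘ Real.exp = Real.exp ∘ (Real.log g.1 + ·) := by
    ext t
    simp [Real.exp_add, Real.exp_log hg]
  have map_dilation : (volume.map Real.exp).map (g.1 * ·) = volume.map Real.exp := by
    rw [Measure.map_map (by fun_prop) (by fun_prop), exp_dilation,
      ← Measure.map_map (by fun_prop) (by fun_prop), map_add_left_eq_self]
  change _ = _ • Measure.map (Prod.map (g.1 * ·) (g.2 + g.1 * ·)) _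
  rw [locScalePrior, ← map_exp_volume, ← Measure.map_prod_map _ _ (by fun_prop) (by fun_prop),
    map_dilation, map_affine_volume g.2 hg.ne', abs_of_pos (inv_pos.2 hg),
    Measure.prod_smul_right, smul_smul, ← ENNReal.ofReal_mul hg.le, mul_inv_cancel₀ hg.ne',
    ENNReal.ofReal_one, one_smul]

variable {ι : Type*}

/-- A set of samples that almost every orbit of `affineAct` visits for a set of parameters of
prior measure one. Since `Real.log` is even, the condition on the gap does not depend on its
sign. -/
def orbitWindow (i j : ι) : Set (ι → ℝ) :=
  {x | x i ∈ Ico 0 1 ∧ Real.log (x j - x i) ∈ Ico 0 1}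

theorem measurableSet_orbitWindow (i j : ι) : MeasurableSet (orbitWindow i j) := by
  have hi : Measurable fun x : ι → ℝ => x i := by fun_prop
  have hgap : Measurable fun x : ι → ℝ => Real.log (x j - x i) := by fun_prop
  exact (hi measurableSet_Ico).inter (hgap measurableSet_Ico)

@[fun_prop]
theorem measurable_indicator_orbitWindow {Ω : Type*} [MeasurableSpace Ω] (i j : ι)
    {x : Ω → ι → ℝ} (hx : Measurable x) :
    Measurable fun ω => (orbitWindow i j).indicator (1 : (ι → ℝ) → ℝ≥0∞) (x ω) :=
  (measurable_one.indicator (measurableSet_orbitWindow i j)).comp hx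

theorem affineAct_exp_mem_orbitWindow_iff {i j : ι} {z : ι → ℝ} (hz : z i ≠ z j) (t m : ℝ) :
    affineAct (Real.exp t, m) z ∈ orbitWindow i j ↔
      t + Real.log (z j - z i) ∈ Ico 0 1 ∧ m + Real.exp t * z i ∈ Ico 0 1 := by
  simp only [orbitWindow, affineAct, mem_ofPred_eq]
  rw [and_comm, add_sub_add_left_eq_sub, ← mul_sub,
    Real.log_mul (Real.exp_ne_zero t) (sub_ne_zero.2 hz.symm), Real.log_exp]

theorem locScalePrior_affineAct_mem_orbitWindow {i j : ι} {z : ι → ℝ} (hz : z i ≠ z j) :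
    locScalePrior ((affineAct · z) ⁻¹' orbitWindow i j) = 1 := by
  have hmeas : MeasurableSet ((affineAct · z) ⁻¹' orbitWindow i j) :=
    (measurableSet_orbitWindow i j).preimage (by fun_prop)
  have volume_fibre (t : ℝ) :
      volume {m : ℝ | affineAct (Real.exp t, m) z ∈ orbitWindow i j} =
        ((· + Real.log (z j - z i)) ⁻¹' Ico 0 1).indicator 1 t := by
    simp_rw [affineAct_exp_mem_orbitWindow_iff hz]
    by_cases ht : t + Real.log (z j - z i) ∈ Ico 0 1
    · rw [indicator_of_mem (by exact ht)]
      simp only [ht, true_and]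
      exact (measure_preimage_add_right volume _ (Ico 0 1)).trans (by simp)
    · rw [indicator_of_notMem (by exact ht)]
      simp [ht]
  calc locScalePrior ((affineAct · z) ⁻¹' orbitWindow i j)
      = ∫⁻ t, volume {m : ℝ | affineAct (Real.exp t, m) z ∈ orbitWindow i j} := by
        rw [locScalePrior_eq_map_exp, Measure.map_apply (by fun_prop) hmeas,
          Measure.volume_eq_prod, Measure.prod_apply (hmeas.preimage (by fun_prop))]
        rfl
    _ = volume ((· + Real.log (z j - z i)) ⁻¹' Ico 0 1) := by
        simp_rw [volume_fibre]
        exact lintegral_indicator_one (measurableSet_Ico.preimage (by fun_prop))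
    _ = 1 := by
        rw [measure_preimage_add_right]
        simp

end Prior

section Posterior

variable {ι : Type*} [Fintype ι] {f : ℝ → ℝ}

theorem lintegral_prior_lintegral_orbitWindow (hf : Measurable f) {i j : ι} (hij : i ≠ j)
    {φ : (ι → ℝ) → ℝ≥0∞} (hφ : Measurable φ) :
    ∫⁻ p, ∫⁻ z, (orbitWindow i j).indicator 1 (affineAct p z) * φ z
        ∂Measure.pi (fun _ : ι => locScaleLaw f 0 1) ∂locScalePrior =
      ∫⁻ z, φ z ∂Measure.pi fun _ : ι => locScaleLaw f 0 1 := by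
  have orbit_integral (z : ι → ℝ) (hz : z i ≠ z j) :
      ∫⁻ p, (orbitWindow i j).indicator 1 (affineAct p z) * φ z ∂locScalePrior = φ z := by
    rw [lintegral_mul_const _ (by fun_prop)]
    convert one_mul (φ z)
    rw [← locScalePrior_affineAct_mem_orbitWindow hz, ← lintegral_indicator_one
      ((measurableSet_orbitWindow i j).preimage (by fun_prop))]
    rfl
  rw [lintegral_lintegral_swap (by fun_prop)]
  exact lintegral_congr_ae ((ae_pi_locScaleLaw_apply_ne_apply hf 0 1 hij).mono orbit_integral)

/-- The unnormalised posterior on the parameters `p = (σ, μ)` given the sample `x`. Its total mass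
is the paper's `A(x)`. -/
noncomputable def locScalePosterior (f : ℝ → ℝ) (x : ι → ℝ) : Measure (ℝ × ℝ) :=
  locScalePrior.withDensity (locScaleLikelihood f x)

theorem lintegral_locScalePosterior (hf : Measurable f) (x : ι → ℝ) {h : ℝ × ℝ → ℝ≥0∞}
    (hh : Measurable h) :
    ∫⁻ p, h p ∂locScalePosterior f x = ∫⁻ p, locScaleLikelihood f x p * h p ∂locScalePrior :=
  lintegral_withDensity_eq_lintegral_mul _ (by fun_prop) hh

theorem measurable_lintegral_locScalePosterior (hf : Measurable f)
    {h : (ι → ℝ) → ℝ × ℝ → ℝ≥0∞} (hh : Measurable (Function.uncurry h)) :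
    Measurable fun x => ∫⁻ p, h x p ∂locScalePosterior f x := by
  simp_rw [fun x => lintegral_locScalePosterior hf x (hh.of_uncurry_left (x := x))]
  exact Measurable.lintegral_prod_right (by fun_prop)

theorem lintegral_locScalePosterior_affineAct (hf : Measurable f) {g : ℝ × ℝ} (hg : 0 < g.1)
    (x : ι → ℝ) {h : ℝ × ℝ → ℝ≥0∞} (hh : Measurable h) :
    ∫⁻ p, h p ∂locScalePosterior f (affineAct g x) =
      ENNReal.ofReal g.1 * ENNReal.ofReal g.1⁻¹ ^ Fintype.card ι *
        ∫⁻ p, h (g.1 * p.1, g.2 + g.1 * p.2) ∂locScalePosterior f x := by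
  rw [lintegral_locScalePosterior hf _ hh, lintegral_locScalePosterior hf _ (by fun_prop)]
  nth_rw 1 [locScalePrior_eq_smul_map hg]
  rw [lintegral_smul_measure, lintegral_map (by fun_prop) (by fun_prop), smul_eq_mul, mul_assoc]
  simp_rw [locScaleLikelihood_affineAct hg, mul_assoc]
  rw [lintegral_const_mul _ (by fun_prop)]

theorem lintegral_prior_lintegral_affineAct (hf : Measurable f)
    {h : (ι → ℝ) → ℝ × ℝ → ℝ≥0∞} (hh : Measurable (Function.uncurry h)) :
    ∫⁻ p, ∫⁻ z, h (affineAct p z) p ∂Measure.pi (fun _ : ι => locScaleLaw f 0 1) ∂locScalePrior =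
      ∫⁻ x, ∫⁻ p, h x p ∂locScalePosterior f x := by
  have lintegral_sample (p : ℝ × ℝ) (hp : 0 < p.1) :
      ∫⁻ z, h (affineAct p z) p ∂Measure.pi (fun _ : ι => locScaleLaw f 0 1) =
        ∫⁻ x, locScaleLikelihood f x p * h x p := by
    have hhp : Measurable fun x => h x p := hh.of_uncurry_right
    rw [← lintegral_map hhp (by fun_prop), ← pi_locScaleLaw_eq_map hf hp,
      pi_locScaleLaw_eq_withDensity hf, lintegral_withDensity_eq_lintegral_mul _ (by fun_prop) hhp]
    rfl
  rw [lintegral_congr_ae (ae_locScalePrior_scale_pos.mono lintegral_sample),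
    lintegral_lintegral_swap (by fun_prop)]
  exact lintegral_congr fun x => (lintegral_locScalePosterior hf x hh.of_uncurry_left).symm

theorem ae_mem_or_locScalePosterior_univ_eq_zero (hf : Measurable f) {s : Set (ι → ℝ)}
    (hs : MeasurableSet s)
    (h : ∀ p : ℝ × ℝ, 0 < p.1 → ∀ᵐ x ∂Measure.pi fun _ : ι => locScaleLaw f p.2 p.1, x ∈ s) :
    ∀ᵐ x, x ∈ s ∨ locScalePosterior f x univ = 0 := by
  have hmeas : Measurable (Function.uncurry fun (x : ι → ℝ) (_ : ℝ × ℝ) =>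
      sᶜ.indicator (1 : (ι → ℝ) → ℝ≥0∞) x) :=
    (measurable_one.indicator hs.compl).comp measurable_fst
  have sample_null (p : ℝ × ℝ) (hp : 0 < p.1) : ∫⁻ z, sᶜ.indicator 1 (affineAct p z)
      ∂Measure.pi (fun _ : ι => locScaleLaw f 0 1) = 0 := by
    have hsp := h p hp
    rw [pi_locScaleLaw_eq_map hf hp] at hsp
    refine lintegral_eq_zero_of_ae_eq_zero ?_
    filter_upwards [ae_of_ae_map (by fun_prop) hsp] with z hz
    exact indicator_of_notMem (notMem_compl_iff.2 hz) _
  have mixture_null : ∫⁻ x, ∫⁻ _, sᶜ.indicator 1 x ∂locScalePosterior f x = 0 := by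
    rw [← lintegral_prior_lintegral_affineAct hf hmeas]
    exact lintegral_eq_zero_of_ae_eq_zero (ae_locScalePrior_scale_pos.mono sample_null)
  rw [lintegral_eq_zero_iff (measurable_lintegral_locScalePosterior hf hmeas)] at mixture_null
  filter_upwards [mixture_null] with x hx
  refine or_iff_not_imp_left.2 fun hxs => ?_
  simpa [hxs] using hx

end Posterior

section Prediction

variable {ι : Type*} [Fintype ι] {f : ℝ → ℝ} {x : ι → ℝ} {α : ℝ≥0∞}

/-- The unnormalised predictive tail, i.e. the paper's `B(y, x)`: the posterior integral of the
probability that the next observation exceeds `y`, written through the standard law. -/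
noncomputable def predictiveTail (f : ℝ → ℝ) (y : ℝ) (x : ι → ℝ) : ℝ≥0∞ :=
  ∫⁻ p, locScaleLaw f 0 1 (Ioi ((y - p.2) / p.1)) ∂locScalePosterior f x

theorem predictiveTail_le [IsProbabilityMeasure (locScaleLaw f 0 1)] (y : ℝ) (x : ι → ℝ) :
    predictiveTail f y x ≤ locScalePosterior f x univ :=
  (lintegral_mono fun _ => prob_le_one).trans_eq lintegral_one

theorem predictiveTail_affineAct (hf : Measurable f) {g : ℝ × ℝ} (hg : 0 < g.1) (y : ℝ)
    (x : ι → ℝ) :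
    predictiveTail f (g.2 + g.1 * y) (affineAct g x) =
      ENNReal.ofReal g.1 * ENNReal.ofReal g.1⁻¹ ^ Fintype.card ι * predictiveTail f y x := by
  rw [predictiveTail, lintegral_locScalePosterior_affineAct hf hg x (by fun_prop)]
  simp_rw [add_sub_add_left_eq_sub, ← mul_sub, mul_div_mul_left _ _ hg.ne']
  rfl

theorem locScalePosterior_affineAct_univ (hf : Measurable f) {g : ℝ × ℝ} (hg : 0 < g.1)
    (x : ι → ℝ) :
    locScalePosterior f (affineAct g x) univ =
      ENNReal.ofReal g.1 * ENNReal.ofReal g.1⁻¹ ^ Fintype.card ι * locScalePosterior f x univ := by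
  simpa using lintegral_locScalePosterior_affineAct hf hg x (measurable_const (a := 1))

/-- `q` is the unique point at which the predictive tail probability given `x` equals `α`.
The equation is multiplied out by the total posterior mass, which may be `0` or `∞`. -/
def IsPredictiveQuantile (f : ℝ → ℝ) (α : ℝ≥0∞) (x : ι → ℝ) (q : ℝ) : Prop :=
  ∀ y, predictiveTail f y x = α * locScalePosterior f x univ ↔ y = q

namespace IsPredictiveQuantile

theorem predictiveTail_eq {q : ℝ} (h : IsPredictiveQuantile f α x q) :
    predictiveTail f q x = α * locScalePosterior f x univ :=
  (h q).2 rfl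

theorem unique {q q' : ℝ} (h : IsPredictiveQuantile f α x q)
    (h' : IsPredictiveQuantile f α x q') : q = q' :=
  (h' q).1 h.predictiveTail_eq

theorem affineAct {q : ℝ} (h : IsPredictiveQuantile f α x q) (hf : Measurable f) {g : ℝ × ℝ}
    (hg : 0 < g.1) : IsPredictiveQuantile f α (affineAct g x) (g.2 + g.1 * q) := by
  intro y
  obtain ⟨w, rfl⟩ : ∃ w, g.2 + g.1 * w = y := ⟨(y - g.2) / g.1, by field_simp; ring⟩
  have factor_ne_zero : ENNReal.ofReal g.1 * ENNReal.ofReal g.1⁻¹ ^ Fintype.card ι ≠ 0 := by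
    simp [hg]
  have factor_ne_top : ENNReal.ofReal g.1 * ENNReal.ofReal g.1⁻¹ ^ Fintype.card ι ≠ ∞ := by
    finiteness
  rw [predictiveTail_affineAct hf hg, locScalePosterior_affineAct_univ hf hg, mul_left_comm,
    ENNReal.mul_right_inj factor_ne_zero factor_ne_top, h w, add_right_inj,
    mul_right_inj' hg.ne']

end IsPredictiveQuantile

theorem ae_quantile_affineAct (hf : Measurable f) {q : (ι → ℝ) → ℝ}
    (hquantile : ∀ p : ℝ × ℝ, 0 < p.1 →
      ∀ᵐ x ∂Measure.pi fun _ : ι => locScaleLaw f p.2 p.1, IsPredictiveQuantile f α x (q x))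
    {p : ℝ × ℝ} (hp : 0 < p.1) :
    ∀ᵐ z ∂Measure.pi fun _ : ι => locScaleLaw f 0 1, q (affineAct p z) = p.2 + p.1 * q z := by
  have quantile_act := hquantile p hp
  rw [pi_locScaleLaw_eq_map hf hp] at quantile_act
  filter_upwards [hquantile (1, 0) one_pos,
    ae_of_ae_map (by fun_prop) quantile_act] with z hz hpz
  exact hpz.unique (hz.affineAct hf hp)

theorem ae_predictiveTail_eq (hf : Measurable f) [IsProbabilityMeasure (locScaleLaw f 0 1)]
    {q : (ι → ℝ) → ℝ} (hq : Measurable q)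
    (hquantile : ∀ p : ℝ × ℝ, 0 < p.1 →
      ∀ᵐ x ∂Measure.pi fun _ : ι => locScaleLaw f p.2 p.1, IsPredictiveQuantile f α x (q x)) :
    ∀ᵐ x, predictiveTail f (q x) x = α * locScalePosterior f x univ := by
  have htail : Measurable fun x => predictiveTail f (q x) x :=
    measurable_lintegral_locScalePosterior hf (by fun_prop)
  have hmass : Measurable fun x : ι → ℝ => locScalePosterior f x univ := by
    simpa using measurable_lintegral_locScalePosterior hf (h := fun (_ : ι → ℝ) _ => 1)
      (by fun_prop)
  have hset := ae_mem_or_locScalePosterior_univ_eq_zero hf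
    (measurableSet_eq_fun htail (hmass.const_mul α))
    fun p hp => (hquantile p hp).mono fun x hx => hx.predictiveTail_eq
  filter_upwards [hset] with x hx
  refine hx.elim id fun hzero => ?_
  rw [hzero, mul_zero, ← nonpos_iff_eq_zero, ← hzero]
  exact predictiveTail_le _ x

theorem lintegral_locScaleLaw_Ioi_quantile (hf : Measurable f)
    [IsProbabilityMeasure (locScaleLaw f 0 1)] [Nontrivial ι] {q : (ι → ℝ) → ℝ}
    (hq : Measurable q)
    (hquantile : ∀ p : ℝ × ℝ, 0 < p.1 →
      ∀ᵐ x ∂Measure.pi fun _ : ι => locScaleLaw f p.2 p.1, IsPredictiveQuantile f α x (q x)) :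
    ∫⁻ z, locScaleLaw f 0 1 (Ioi (q z)) ∂Measure.pi (fun _ : ι => locScaleLaw f 0 1) = α := by
  obtain ⟨i, j, hij⟩ := exists_pair_ne ι
  let P : Measure (ι → ℝ) := Measure.pi fun _ => locScaleLaw f 0 1
  let tail : ℝ → ℝ≥0∞ := fun y => locScaleLaw f 0 1 (Ioi y)
  let window : (ι → ℝ) → ℝ≥0∞ := (orbitWindow i j).indicator 1
  have hwindow : Measurable window := by fun_prop
  have htail : Measurable tail := by fun_prop
  calc ∫⁻ z, tail (q z) ∂P
      = ∫⁻ p, ∫⁻ z, window (affineAct p z) * tail (q z) ∂P ∂locScalePrior :=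
        (lintegral_prior_lintegral_orbitWindow hf hij (by fun_prop)).symm
    _ = ∫⁻ p, ∫⁻ z, window (affineAct p z) * tail ((q (affineAct p z) - p.2) / p.1)
          ∂P ∂locScalePrior := by
        refine lintegral_congr_ae (ae_locScalePrior_scale_pos.mono fun p hp => ?_)
        refine lintegral_congr_ae ((ae_quantile_affineAct hf hquantile hp).mono fun z hz => ?_)
        simp only [hz, add_sub_cancel_left, mul_div_cancel_left₀ _ hp.ne']
    _ = ∫⁻ x, ∫⁻ p, window x * tail ((q x - p.2) / p.1) ∂locScalePosterior f x :=
        lintegral_prior_lintegral_affineAct hf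
          (h := fun x p => window x * tail ((q x - p.2) / p.1)) (by fun_prop)
    _ = ∫⁻ x, α * ∫⁻ _, window x * 1 ∂locScalePosterior f x := by
        refine lintegral_congr_ae ((ae_predictiveTail_eq hf hq hquantile).mono fun x hx => ?_)
        dsimp only
        rw [lintegral_const_mul _ (by fun_prop), lintegral_const_mul _
          measurable_const, lintegral_one, mul_left_comm, ← hx]
        rfl
    _ = α * ∫⁻ p, ∫⁻ z, window (affineAct p z) * 1 ∂P ∂locScalePrior := by
        have hmeas : Measurable (Function.uncurry fun (x : ι → ℝ) (_ : ℝ × ℝ) => window x * 1) :=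
          by fun_prop
        rw [lintegral_const_mul _ (measurable_lintegral_locScalePosterior hf hmeas),
          lintegral_prior_lintegral_affineAct hf hmeas]
    _ = α := by
        rw [lintegral_prior_lintegral_orbitWindow hf hij measurable_const, lintegral_one,
          measure_univ, mul_one]

end Prediction

section Densities

variable {f : ℝ → ℝ}

theorem locScaleLaw_zero_one (f : ℝ → ℝ) :
    locScaleLaw f 0 1 = volume.withDensity fun z => ENNReal.ofReal (f z) := by
  simp [locScaleLaw]

theorem isProbabilityMeasure_locScaleLaw_zero_one (hf_nonneg : ∀ z, 0 ≤ f z)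
    (hf_int : ∫ z, f z = 1) : IsProbabilityMeasure (locScaleLaw f 0 1) := by
  constructor
  rw [locScaleLaw_zero_one, withDensity_apply _ MeasurableSet.univ, setLIntegral_univ,
    ← ofReal_integral_eq_lintegral_ofReal (integrable_of_integral_eq_one hf_int)
      (Eventually.of_forall hf_nonneg), hf_int, ENNReal.ofReal_one]

theorem measureReal_locScaleLaw_Ioi (hf_nonneg : ∀ z, 0 ≤ f z) (hf_int : ∫ z, f z = 1) (y : ℝ) :
    (locScaleLaw f 0 1).real (Ioi y) = 1 - ∫ z in Iic y, f z := by
  have hf_integrable : Integrable f := integrable_of_integral_eq_one hf_int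
  have integral_split := integral_add_compl (measurableSet_Iic (a := y)) hf_integrable
  rw [hf_int, compl_Iic] at integral_split
  rw [← eq_sub_of_add_eq' integral_split, locScaleLaw_zero_one, measureReal_def,
    withDensity_apply _ measurableSet_Ioi, integral_eq_lintegral_of_nonneg_ae
      (Eventually.of_forall hf_nonneg) hf_integrable.integrableOn.aestronglyMeasurable]

theorem inv_mul_locScaleLikelihood (hf_nonneg : ∀ z, 0 ≤ f z) {n : ℕ} (x : Fin n → ℝ) {p : ℝ × ℝ}
    (hp : 0 < p.1) :
    ENNReal.ofReal p.1⁻¹ * locScaleLikelihood f x p =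
      ENNReal.ofReal (p.1 ^ (-(n : ℤ) - 1) * ∏ i, f ((x i - p.2) / p.1)) := by
  rw [locScaleLikelihood, ← ENNReal.ofReal_prod_of_nonneg fun i _ =>
      mul_nonneg (inv_nonneg.2 hp.le) (hf_nonneg _),
    ← ENNReal.ofReal_mul (inv_nonneg.2 hp.le), Finset.prod_mul_distrib, Finset.prod_const,
    Finset.card_univ, Fintype.card_fin, ← mul_assoc, ← neg_add', zpow_neg, zpow_add_one₀ hp.ne',
    zpow_natCast, mul_inv, inv_pow, mul_comm p.1⁻¹]

theorem locScalePosterior_eq_withDensity (hf : Measurable f) (hf_nonneg : ∀ z, 0 ≤ f z) {n : ℕ}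
    (x : Fin n → ℝ) :
    locScalePosterior f x = (volume.restrict (Ioi 0 ×ˢ univ)).withDensity fun p =>
      ENNReal.ofReal (p.1 ^ (-(n : ℤ) - 1) * ∏ i, f ((x i - p.2) / p.1)) := by
  rw [locScalePosterior, locScalePrior_eq_withDensity,
    ← withDensity_mul _ (by fun_prop) (by fun_prop)]
  refine withDensity_congr_ae ?_
  filter_upwards [ae_restrict_mem (measurableSet_Ioi.prod MeasurableSet.univ)] with p hp
  exact inv_mul_locScaleLikelihood hf_nonneg x hp.1

theorem lintegral_locScalePosterior_ofReal (hf : Measurable f) (hf_nonneg : ∀ z, 0 ≤ f z) {n : ℕ}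
    {x : Fin n → ℝ} {w : ℝ × ℝ → ℝ} (hw : Measurable w) (hw_mem : ∀ p, w p ∈ Icc 0 1)
    (hint : IntegrableOn
      (fun p : ℝ × ℝ => p.1 ^ (-(n : ℤ) - 1) * ∏ i, f ((x i - p.2) / p.1)) (Ioi 0 ×ˢ univ)) :
    ∫⁻ p, ENNReal.ofReal (w p) ∂locScalePosterior f x =
      ENNReal.ofReal (∫ σ in Ioi 0, ∫ μ,
        σ ^ (-(n : ℤ) - 1) * (∏ i, f ((x i - μ) / σ)) * w (σ, μ)) := by
  let k : ℝ × ℝ → ℝ := fun p => p.1 ^ (-(n : ℤ) - 1) * ∏ i, f ((x i - p.2) / p.1)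
  have hk_nonneg : ∀ᵐ p ∂volume.restrict (Ioi 0 ×ˢ univ), 0 ≤ k p := by
    filter_upwards [ae_restrict_mem (measurableSet_Ioi.prod MeasurableSet.univ)] with p hp
    exact mul_nonneg (zpow_nonneg (le_of_lt hp.1) _) (Finset.prod_nonneg fun _ _ => hf_nonneg _)
  have hkw : IntegrableOn (fun p => k p * w p) (Ioi 0 ×ˢ univ) := by
    refine Integrable.mul_bdd (c := 1) hint hw.aestronglyMeasurable
      (Eventually.of_forall fun p => ?_)
    rw [Real.norm_of_nonneg (hw_mem p).1]
    exact (hw_mem p).2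
  calc ∫⁻ p, ENNReal.ofReal (w p) ∂locScalePosterior f x
      = ∫⁻ p in Ioi 0 ×ˢ univ, ENNReal.ofReal (k p * w p) := by
        rw [locScalePosterior_eq_withDensity hf hf_nonneg,
          lintegral_withDensity_eq_lintegral_mul₀ hint.aemeasurable.ennreal_ofReal (by fun_prop)]
        exact lintegral_congr_ae (hk_nonneg.mono fun p hp => (ENNReal.ofReal_mul hp).symm)
    _ = ENNReal.ofReal (∫ p in Ioi 0 ×ˢ univ, k p * w p) :=
        (ofReal_integral_eq_lintegral_ofReal hkw
          (hk_nonneg.mono fun p hp => mul_nonneg hp (hw_mem p).1)).symm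
    _ = ENNReal.ofReal (∫ σ in Ioi 0, ∫ μ, k (σ, μ) * w (σ, μ)) := by
        rw [Measure.volume_eq_prod, setIntegral_prod _ hkw, Measure.restrict_univ]

theorem locScalePosterior_univ_eq_ofReal (hf : Measurable f) (hf_nonneg : ∀ z, 0 ≤ f z) {n : ℕ}
    {x : Fin n → ℝ} (hint : IntegrableOn
      (fun p : ℝ × ℝ => p.1 ^ (-(n : ℤ) - 1) * ∏ i, f ((x i - p.2) / p.1)) (Ioi 0 ×ˢ univ)) :
    locScalePosterior f x univ =
      ENNReal.ofReal (∫ σ in Ioi 0, ∫ μ, σ ^ (-(n : ℤ) - 1) * ∏ i, f ((x i - μ) / σ)) := by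
  simpa using lintegral_locScalePosterior_ofReal hf hf_nonneg (w := 1) measurable_one (by simp) hint

theorem predictiveTail_eq_ofReal (hf : Measurable f) (hf_nonneg : ∀ z, 0 ≤ f z)
    (hf_int : ∫ z, f z = 1) {n : ℕ} {x : Fin n → ℝ} (hint : IntegrableOn
      (fun p : ℝ × ℝ => p.1 ^ (-(n : ℤ) - 1) * ∏ i, f ((x i - p.2) / p.1)) (Ioi 0 ×ˢ univ))
    (y : ℝ) :
    predictiveTail f y x = ENNReal.ofReal (∫ σ in Ioi 0, ∫ μ,
      σ ^ (-(n : ℤ) - 1) * (∏ i, f ((x i - μ) / σ)) * (1 - ∫ z in Iic ((y - μ) / σ), f z)) := by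
  have := isProbabilityMeasure_locScaleLaw_zero_one hf_nonneg hf_int
  have hw : Measurable fun p : ℝ × ℝ => (locScaleLaw f 0 1).real (Ioi ((y - p.2) / p.1)) :=
    Measurable.ennreal_toReal (by fun_prop)
  simp_rw [← measureReal_locScaleLaw_Ioi hf_nonneg hf_int]
  rw [← lintegral_locScalePosterior_ofReal hf hf_nonneg hw
    (fun _ => ⟨measureReal_nonneg, measureReal_le_one⟩) hint]
  exact lintegral_congr fun _ => (ofReal_measureReal (by finiteness)).symm

theorem isPredictiveQuantile_of_div_eq_iff {ι : Type*} [Fintype ι] {x : ι → ℝ} {a c q : ℝ}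
    {b : ℝ → ℝ} (ha : 0 < a) (hc : 0 < c) (hmass : locScalePosterior f x univ = ENNReal.ofReal a)
    (htail : ∀ y, predictiveTail f y x = ENNReal.ofReal (b y)) (hq : ∀ y, b y / a = c ↔ y = q) :
    IsPredictiveQuantile f (ENNReal.ofReal c) x q := fun y => by
  have hca : 0 < c * a := mul_pos hc ha
  rw [hmass, htail, ← ENNReal.ofReal_mul hc.le, ← hq, div_eq_iff ha.ne']
  refine ⟨fun h => ?_, congrArg _⟩
  have hb : 0 < b y := ENNReal.ofReal_pos.1 (h ▸ ENNReal.ofReal_pos.2 hca)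
  exact (ENNReal.ofReal_eq_ofReal_iff hb.le hca.le).1 h

end Densities

theorem bayes_locScale_predictor_probability_preserving_general {N : ℕ} (hN : 2 ≤ N) {f : ℝ → ℝ}
    (hf : Measurable f) [IsProbabilityMeasure (locScaleLaw f 0 1)] {α : ℝ≥0∞}
    {q : (Fin N → ℝ) → ℝ} (hq : Measurable q)
    (hquantile : ∀ p : ℝ × ℝ, 0 < p.1 →
      ∀ᵐ x ∂Measure.pi fun _ : Fin N => locScaleLaw f p.2 p.1, IsPredictiveQuantile f α x (q x))
    (μ : ℝ) {σ : ℝ} (hσ : 0 < σ) :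
    (Measure.pi fun _ : Fin (N + 1) => locScaleLaw f μ σ)
      {z | q (fun i => z i.castSucc) < z (Fin.last N)} = α := by
  have : Nontrivial (Fin N) := Fin.nontrivial_iff_two_le.2 hN
  let p : ℝ × ℝ := (σ, μ)
  rw [pi_lt_last_eq_lintegral _ hq, pi_locScaleLaw_eq_map hf (p := p) hσ,
    lintegral_map (by fun_prop) (by fun_prop),
    ← lintegral_locScaleLaw_Ioi_quantile hf hq hquantile]
  refine lintegral_congr_ae ((ae_quantile_affineAct hf hquantile (p := p) hσ).mono fun z hz => ?_)
  simp only [hz, locScaleLaw_Ioi hf μ hσ, p, mul_div_cancel_left₀ _ hσ.ne', add_sub_cancel_left]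

/-- The Bayesian predictor for a location–scale family under the improper prior `dμ dσ/σ`
is probability-preserving at every parameter `(μ*, σ*)`: the next i.i.d. sample exceeds the
level-`T` Bayesian prediction with probability exactly `1/T`. -/
theorem bayes_locScale_predictor_probability_preserving
    {N : ℕ} (hN : 2 ≤ N)
    (f : ℝ → ℝ) (hf_meas : Measurable f) (hf_nonneg : ∀ z, 0 ≤ f z)
    (hf_int : ∫ z, f z = 1)
    (F : ℝ → ℝ) (hF : ∀ y, F y = ∫ z in Iic y, f z)
    (T : ℝ) (hT : 1 < T)
    (A : (Fin N → ℝ) → ℝ) (B : ℝ → (Fin N → ℝ) → ℝ)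
    (hA : ∀ x : Fin N → ℝ,
      A x = ∫ σ in Ioi (0 : ℝ), ∫ μ : ℝ,
        σ ^ (-(N : ℤ) - 1) * ∏ i : Fin N, f ((x i - μ) / σ))
    (hB : ∀ (y : ℝ) (x : Fin N → ℝ),
      B y x = ∫ σ in Ioi (0 : ℝ), ∫ μ : ℝ,
        σ ^ (-(N : ℤ) - 1) * (∏ i : Fin N, f ((x i - μ) / σ)) * (1 - F ((y - μ) / σ)))
    (xT : (Fin N → ℝ) → ℝ) (hxT_meas : Measurable xT)
    (h_ae : ∀ (μs σs : ℝ), 0 < σs →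
      ∀ᵐ x ∂(Measure.pi fun _ : Fin N => locScaleLaw f μs σs),
        (0 < A x) ∧
        (IntegrableOn
          (fun p : ℝ × ℝ => p.1 ^ (-(N : ℤ) - 1) * ∏ i : Fin N, f ((x i - p.2) / p.1))
          (Ioi (0 : ℝ) ×ˢ (univ : Set ℝ))) ∧
        Continuous (fun y => B y x / A x) ∧
        StrictAntiOn (fun y => B y x / A x) {y | B y x / A x ∈ Ioo (0 : ℝ) 1} ∧
        Tendsto (fun y => B y x / A x) atBot (nhds 1) ∧
        Tendsto (fun y => B y x / A x) atTop (nhds 0) ∧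
        B (xT x) x / A x = 1 / T) :
    ∀ (μs σs : ℝ), 0 < σs →
      (Measure.pi fun _ : Fin (N + 1) => locScaleLaw f μs σs)
        {z | xT (fun i : Fin N => z i.castSucc) < z (Fin.last N)}
      = ENNReal.ofReal (1 / T) := by
  have := isProbabilityMeasure_locScaleLaw_zero_one hf_nonneg hf_int
  refine fun μ σ hσ => bayes_locScale_predictor_probability_preserving_general hN hf_meas hxT_meas
    (fun p hp => ?_) μ hσ
  have hlevel : 1 / T ∈ Ioo (0 : ℝ) 1 :=
    ⟨one_div_pos.2 (one_pos.trans hT), (div_lt_one (one_pos.trans hT)).2 hT⟩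
  filter_upwards [h_ae p.2 p.1 hp] with x hx
  obtain ⟨hA_pos, hint, -, hanti, -, -, hsol⟩ := hx
  have hmass := locScalePosterior_univ_eq_ofReal hf_meas hf_nonneg hint
  have htail := predictiveTail_eq_ofReal hf_meas hf_nonneg hf_int hint
  simp only [← hA, ← hF, ← hB] at hmass htail
  exact isPredictiveQuantile_of_div_eq_iff hA_pos hlevel.1 hmass htail
    (eq_iff_eq_of_strictAntiOn_preimage hanti hlevel hsol)
end

section
/- Let x₁ < x₂ < x₃ be three distinct real numbers. Then the marginal likelihood integral for a sample of size N = 3 from the Generalised Pareto family under the improper prior Π₀(μ, σ, ξ) = (1/σ)·(1 + ξ²)^{−1/2} is finite and strictly positive: 0 < ∫_ℝ (1 + ξ²)^{−1/2} ∫₀^∞ σ^{−1} ∫_ℝ ∏_{i=1}^{3} f_{μ,σ,ξ}(x_i) dμ dσ dξ < ∞. In other words, the posterior distribution on (μ, σ, ξ) obtained from this prior and three GPD observations is proper. -/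
open MeasureTheory Set

/-- The Generalised Pareto density with location `μ`, scale `σ` and tail parameter `ξ`:
`(1/σ)·(1 + ξ(x-μ)/σ)^(-1/ξ - 1)` for `x ≥ μ` with `1 + ξ(x-μ)/σ > 0` (and `0` otherwise);
for `ξ = 0` it is `(1/σ)·exp(-(x-μ)/σ)` for `x ≥ μ` (and `0` otherwise). -/
noncomputable def gpdDensity (μ σ ξ x : ℝ) : ℝ :=
  if ξ = 0 then
    (if μ ≤ x then (1 / σ) * Real.exp (-(x - μ) / σ) else 0)
  else
    (if μ ≤ x ∧ 0 < 1 + ξ * (x - μ) / σ then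
      (1 / σ) * Real.rpow (1 + ξ * (x - μ) / σ) (-1 / ξ - 1)
    else 0)

/-!
Conditioning on exceeding the smallest observation `x₀` turns a GPD with parameters `(μ, σ, ξ)` into
one with parameters `(x₀, s, ξ)`, where `s = σ + ξ (x₀ - μ)`. The likelihood of `N` observations
divided by `σ` therefore factors into a part free of `μ` and `S ^ N / σ`, with `S` the survival
function at `x₀`. In the variables `y = x₀ - μ` and `s`, the latter is `1 / N` times the GPD density
at `y` with scale `s / N` and tail parameter `-ξ / N`. As `(μ, σ) ↦ (y, s)` is measure-preserving,
the location integrates out exactly, leaving `N - 1` observations with known location `x₀` and the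
prior `1 / s`.

For known location, a single observation `x` contributes `∫ f(x) ds / s = (x - x₀)⁻¹`. For the pair
`x < y` that remains when `N = 3`, the other density is bounded: by Bernoulli's inequality it is
`O((1 + ξ)⁻¹)` when `ξ > -1`, and for `ξ < 0` the support condition at `y` forces
`s + ξ (x - x₀) > -ξ (y - x)`, which makes the density at `x` `O(|ξ|⁻¹)`. So the location-scale
marginal is `O((1 + |ξ|)⁻¹)`, and this is integrable against `(1 + ξ²)^(-1/2)`.
-/

section Bernoulli

theorem one_add_mul_self_le_rpow_one_add_of_nonpos {s p : ℝ} (hs : -1 < s) (hp : p ≤ 0) :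
    1 + p * s ≤ (1 + s) ^ p := by
  have hlog : Real.log (1 + s) ≤ s := by
    linarith [Real.log_le_sub_one_of_pos (show 0 < 1 + s by linarith)]
  calc 1 + p * s ≤ p * Real.log (1 + s) + 1 := by
        linarith [mul_le_mul_of_nonpos_left hlog hp]
    _ ≤ Real.exp (p * Real.log (1 + s)) := Real.add_one_le_exp _
    _ = (1 + s) ^ p := by rw [Real.rpow_def_of_pos (by linarith), mul_comm]

theorem one_add_mul_le_rpow_one_add_inv {ξ z : ℝ} (hξ : -1 < ξ) (hξ0 : ξ ≠ 0)
    (hz : 0 < 1 + ξ * z) : 1 + (1 + ξ) * z ≤ (1 + ξ * z) ^ (1 / ξ + 1) := by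
  have hlin : 1 + (1 + ξ) * z = 1 + (1 / ξ + 1) * (ξ * z) := by
    field_simp
  rw [hlin]
  rcases hξ0.lt_or_gt with hneg | hpos
  · refine one_add_mul_self_le_rpow_one_add_of_nonpos (by linarith) ?_
    linarith [(div_le_iff_of_neg hneg).2 (show -1 * ξ ≤ 1 by linarith)]
  · exact one_add_mul_self_le_rpow_one_add (by linarith) (by linarith [one_div_pos.2 hpos])

end Bernoulli

/-- The survival function `P(X > x)` of the Generalised Pareto distribution. The formula is
meaningful only for `μ ≤ x` and `0 ≤ σ + ξ (x - μ)`; it is not truncated outside this range. -/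
noncomputable def gpdSurvival (μ σ ξ x : ℝ) : ℝ :=
  if ξ = 0 then Real.exp (-(x - μ) / σ) else (1 + ξ * (x - μ) / σ) ^ (-1 / ξ)

section Survival

variable {μ σ ξ x : ℝ}

theorem one_add_mul_div_eq (hσ : σ ≠ 0) :
    1 + ξ * (x - μ) / σ = (σ + ξ * (x - μ)) / σ := by field_simp

theorem one_add_mul_div_pos (hσ : 0 < σ) (hx : 0 < σ + ξ * (x - μ)) :
    0 < 1 + ξ * (x - μ) / σ := by
  rw [one_add_mul_div_eq hσ.ne']
  exact div_pos hx hσ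

theorem gpdSurvival_pos (hσ : 0 < σ) (hx : 0 < σ + ξ * (x - μ)) : 0 < gpdSurvival μ σ ξ x := by
  unfold gpdSurvival
  split_ifs
  · exact Real.exp_pos _
  · exact Real.rpow_pos_of_pos (one_add_mul_div_pos hσ hx) _

theorem gpdSurvival_self : gpdSurvival μ σ ξ μ = 1 := by
  simp [gpdSurvival]

theorem gpdSurvival_le_one (hσ : 0 < σ) (hμ : μ ≤ x) (hx : 0 < σ + ξ * (x - μ)) :
    gpdSurvival μ σ ξ x ≤ 1 := by
  have hd : 0 ≤ (x - μ) / σ := div_nonneg (sub_nonneg.2 hμ) hσ.le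
  have hbase := one_add_mul_div_pos hσ hx
  unfold gpdSurvival
  split_ifs with hξ
  · rw [Real.exp_le_one_iff, neg_div]
    exact neg_nonpos.2 hd
  rw [mul_div_assoc] at hbase ⊢
  rcases lt_or_gt_of_ne hξ with hneg | hpos
  · refine Real.rpow_le_one hbase.le ?_ (div_nonneg_of_nonpos (by norm_num) hneg.le)
    linarith [mul_nonpos_of_nonpos_of_nonneg hneg.le hd]
  · refine Real.rpow_le_one_of_one_le_of_nonpos ?_
      (div_nonpos_of_nonpos_of_nonneg (by norm_num) hpos.le)
    linarith [mul_nonneg hpos.le hd]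

theorem gpdSurvival_eq_mul (hσ : 0 < σ) {m : ℝ} (hm : 0 < σ + ξ * (m - μ))
    (hx : 0 < σ + ξ * (x - μ)) :
    gpdSurvival μ σ ξ x = gpdSurvival μ σ ξ m * gpdSurvival m (σ + ξ * (m - μ)) ξ x := by
  unfold gpdSurvival
  split_ifs with hξ
  · rw [← Real.exp_add, hξ]
    ring_nf
  · have hx' : 0 < σ + ξ * (m - μ) + ξ * (x - m) := by linarith
    rw [← Real.mul_rpow (one_add_mul_div_pos hσ hm).le (one_add_mul_div_pos hm hx').le]
    congr 1
    field_simp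
    ring

theorem gpdSurvival_pow (hσ : 0 < σ) (hx : 0 < σ + ξ * (x - μ)) {n : ℕ} (hn : n ≠ 0) :
    gpdSurvival μ σ ξ x ^ n =
      gpdSurvival 0 ((σ + ξ * (x - μ)) / n) (-ξ / n) (x - μ) := by
  have hn' : (n : ℝ) ≠ 0 := Nat.cast_ne_zero.2 hn
  by_cases hξ : ξ = 0
  · simp only [gpdSurvival, hξ, ← Real.exp_nat_mul, neg_zero, zero_div, zero_mul,
      add_zero, sub_zero, if_true]
    congr 1
    field_simp
  · have hξn : -ξ / n ≠ 0 := div_ne_zero (neg_ne_zero.2 hξ) hn'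
    have hbase : 1 + -ξ / n * (x - μ - 0) / ((σ + ξ * (x - μ)) / n) =
        (1 + ξ * (x - μ) / σ)⁻¹ := by
      field_simp
      ring
    have hexp : -(-1 / (-ξ / n)) = -1 / ξ * n := by field_simp
    have hpos := one_add_mul_div_pos hσ hx
    simp only [gpdSurvival, if_neg hξ, if_neg hξn]
    rw [hbase, Real.inv_rpow hpos.le, ← Real.rpow_neg hpos.le, hexp, Real.rpow_mul hpos.le,
      Real.rpow_natCast]

end Survival

section Density

variable {μ σ ξ x : ℝ}

theorem gpdDensity_of_lt (hx : x < μ) : gpdDensity μ σ ξ x = 0 := by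
  simp [gpdDensity, hx.not_ge]

theorem gpdDensity_of_nonpos (hσ : 0 < σ) (hx : σ + ξ * (x - μ) ≤ 0) :
    gpdDensity μ σ ξ x = 0 := by
  have hξ : ξ ≠ 0 := by
    rintro rfl
    linarith
  have hbase : ¬ 0 < 1 + ξ * (x - μ) / σ := by
    rw [one_add_mul_div_eq hσ.ne', not_lt]
    exact div_nonpos_of_nonpos_of_nonneg hx hσ.le
  simp [gpdDensity, hξ, hbase]

theorem gpdDensity_eq_gpdSurvival_div (hσ : 0 < σ) (hμ : μ ≤ x) (hx : 0 < σ + ξ * (x - μ)) :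
    gpdDensity μ σ ξ x = gpdSurvival μ σ ξ x / (σ + ξ * (x - μ)) := by
  have hbase := one_add_mul_div_pos hσ hx
  unfold gpdDensity gpdSurvival
  by_cases hξ : ξ = 0
  · simp only [hξ, hμ, if_true, zero_mul, add_zero, one_div_mul_eq_div]
  · rw [if_neg hξ, if_neg hξ, if_pos ⟨hμ, hbase⟩, Real.rpow_eq_pow, Real.rpow_sub_one hbase.ne',
      one_div_mul_eq_div, div_div]
    congr 1
    field_simp

theorem gpdDensity_nonneg (hσ : 0 < σ) : 0 ≤ gpdDensity μ σ ξ x := by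
  rcases lt_or_ge x μ with hμ | hμ
  · rw [gpdDensity_of_lt hμ]
  rcases le_or_gt (σ + ξ * (x - μ)) 0 with hx | hx
  · rw [gpdDensity_of_nonpos hσ hx]
  · rw [gpdDensity_eq_gpdSurvival_div hσ hμ hx]
    exact div_nonneg (gpdSurvival_pos hσ hx).le hx.le

theorem gpdDensity_pos (hσ : 0 < σ) (hμ : μ ≤ x) (hx : 0 < σ + ξ * (x - μ)) :
    0 < gpdDensity μ σ ξ x := by
  rw [gpdDensity_eq_gpdSurvival_div hσ hμ hx]
  exact div_pos (gpdSurvival_pos hσ hx) hx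

theorem gpdDensity_eq_gpdSurvival_mul (hσ : 0 < σ) {m : ℝ} (hμ : μ ≤ m) (hmx : m ≤ x)
    (hm : 0 < σ + ξ * (m - μ)) :
    gpdDensity μ σ ξ x = gpdSurvival μ σ ξ m * gpdDensity m (σ + ξ * (m - μ)) ξ x := by
  have hscale : σ + ξ * (m - μ) + ξ * (x - m) = σ + ξ * (x - μ) := by ring
  rcases le_or_gt (σ + ξ * (x - μ)) 0 with hx | hx
  · rw [gpdDensity_of_nonpos hσ hx, gpdDensity_of_nonpos hm (hscale ▸ hx), mul_zero]
  · rw [gpdDensity_eq_gpdSurvival_div hσ (hμ.trans hmx) hx,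
      gpdDensity_eq_gpdSurvival_div hm hmx (hscale ▸ hx), gpdSurvival_eq_mul hσ hm hx, hscale,
      mul_div_assoc]

theorem gpdDensity_le_inv (hσ : 0 < σ) (hμ : μ ≤ x) (hx : 0 < σ + ξ * (x - μ)) :
    gpdDensity μ σ ξ x ≤ (σ + ξ * (x - μ))⁻¹ := by
  rw [gpdDensity_eq_gpdSurvival_div hσ hμ hx, div_eq_mul_inv]
  exact mul_le_of_le_one_left (inv_nonneg.2 hx.le) (gpdSurvival_le_one hσ hμ hx)

theorem add_mul_mul_gpdSurvival_le (hσ : 0 < σ) (hξ : -1 < ξ) (hx : 0 < σ + ξ * (x - μ)) :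
    (σ + (1 + ξ) * (x - μ)) * gpdSurvival μ σ ξ x ≤ σ + ξ * (x - μ) := by
  have hbase := one_add_mul_div_pos hσ hx
  suffices h : 1 + (1 + ξ) * ((x - μ) / σ) ≤
      (1 + ξ * (x - μ) / σ) * (gpdSurvival μ σ ξ x)⁻¹ by
    rw [← div_eq_mul_inv, le_div_iff₀ (gpdSurvival_pos hσ hx), one_add_mul_div_eq hσ.ne',
      le_div_iff₀ hσ] at h
    refine le_of_eq_of_le ?_ h
    field_simp
  unfold gpdSurvival
  split_ifs with hξ0
  · rw [← Real.exp_neg, hξ0, neg_div, neg_neg, zero_mul, zero_div, add_zero, one_mul, one_mul]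
    linarith [Real.add_one_le_exp ((x - μ) / σ)]
  · rw [← Real.rpow_neg hbase.le, neg_div, neg_neg]
    rw [mul_comm (1 + ξ * (x - μ) / σ), ← Real.rpow_add_one hbase.ne', mul_div_assoc]
    rw [mul_div_assoc] at hbase
    exact one_add_mul_le_rpow_one_add_inv hξ hξ0 hbase

theorem gpdDensity_le_inv_mul (hσ : 0 < σ) (hξ : -1 < ξ) (hμ : μ < x) :
    gpdDensity μ σ ξ x ≤ ((1 + ξ) * (x - μ))⁻¹ := by
  have hden : 0 < (1 + ξ) * (x - μ) := mul_pos (by linarith) (sub_pos.2 hμ)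
  rcases le_or_gt (σ + ξ * (x - μ)) 0 with hx | hx
  · rw [gpdDensity_of_nonpos hσ hx]
    exact inv_nonneg.2 hden.le
  · rw [gpdDensity_eq_gpdSurvival_div hσ hμ.le hx, div_le_iff₀ hx, inv_mul_eq_div,
      le_div_iff₀ hden, mul_comm]
    refine le_trans ?_ (add_mul_mul_gpdSurvival_le hσ hξ hx)
    gcongr
    · exact (gpdSurvival_pos hσ hx).le
    · linarith

end Density

section Normalization

variable {μ σ ξ x : ℝ}

@[fun_prop]
theorem measurable_gpdDensity {α : Type*} [MeasurableSpace α] {μ σ ξ x : α → ℝ}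
    (hμ : Measurable μ) (hσ : Measurable σ) (hξ : Measurable ξ) (hx : Measurable x) :
    Measurable fun a => gpdDensity (μ a) (σ a) (ξ a) (x a) := by
  have hbase : Measurable fun a => 1 + ξ a * (x a - μ a) / σ a := by fun_prop
  have hle : MeasurableSet {a | μ a ≤ x a} := measurableSet_le hμ hx
  refine Measurable.ite (measurableSet_eq_fun hξ measurable_const)
    (Measurable.ite hle (by fun_prop) measurable_const)
    (Measurable.ite (hle.inter (measurableSet_lt measurable_const hbase)) ?_ measurable_const)
  exact (measurable_const.div hσ).mul (hbase.pow ((measurable_const.div hξ).sub_const 1))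

theorem hasDerivAt_neg_gpdSurvival (hσ : 0 < σ) (hμ : μ ≤ x) (hx : 0 < σ + ξ * (x - μ)) :
    HasDerivAt (fun t => -gpdSurvival μ σ ξ t) (gpdDensity μ σ ξ x) x := by
  have hbase := one_add_mul_div_pos hσ hx
  have hsub : HasDerivAt (fun t => t - μ) 1 x := (hasDerivAt_id x).sub_const μ
  rw [gpdDensity_eq_gpdSurvival_div hσ hμ hx]
  unfold gpdSurvival
  by_cases hξ : ξ = 0
  · simp only [hξ, if_true]
    refine ((hsub.fun_neg.div_const σ).exp.neg).congr_deriv ?_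
    ring
  · simp only [hξ, if_false]
    refine ((((hsub.const_mul ξ).div_const σ).const_add 1).rpow_const
      (Or.inl hbase.ne')).neg.congr_deriv ?_
    rw [Real.rpow_sub_one hbase.ne']
    field_simp

theorem tendsto_gpdSurvival_atTop (hσ : 0 < σ) (hξ : 0 ≤ ξ) :
    Filter.Tendsto (gpdSurvival μ σ ξ) Filter.atTop (nhds 0) := by
  have hdiff : Filter.Tendsto (fun t => (t - μ) / σ) Filter.atTop Filter.atTop :=
    (Filter.tendsto_atTop_add_const_right _ (-μ) Filter.tendsto_id).atTop_div_const hσ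
  unfold gpdSurvival
  rcases hξ.eq_or_lt with rfl | hpos
  · simpa only [if_true, neg_div, Function.comp_def] using
      Real.tendsto_exp_neg_atTop_nhds_zero.comp hdiff
  · have hbase : Filter.Tendsto (fun t => 1 + ξ * (t - μ) / σ) Filter.atTop Filter.atTop := by
      simpa only [mul_div_assoc] using
        Filter.tendsto_atTop_add_const_left _ 1 (hdiff.const_mul_atTop hpos)
    simpa only [hpos.ne', if_false, neg_div, Function.comp_def] using
      (tendsto_rpow_neg_atTop (one_div_pos.2 hpos)).comp hbase

theorem support_ofReal_gpdDensity_subset_Ici :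
    (fun x => ENNReal.ofReal (gpdDensity μ σ ξ x)).support ⊆ Ici μ := by
  intro x hx
  contrapose! hx
  simp [gpdDensity_of_lt (not_le.1 hx)]

theorem lintegral_gpdDensity_of_nonneg (hσ : 0 < σ) (hξ : 0 ≤ ξ) :
    ∫⁻ x, ENNReal.ofReal (gpdDensity μ σ ξ x) = 1 := by
  have hscale : ∀ x ∈ Ici μ, 0 < σ + ξ * (x - μ) := fun x hx =>
    add_pos_of_pos_of_nonneg hσ (mul_nonneg hξ (sub_nonneg.2 hx))
  have hderiv : ∀ x ∈ Ici μ, HasDerivAt (fun t => -gpdSurvival μ σ ξ t) (gpdDensity μ σ ξ x) x :=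
    fun x hx => hasDerivAt_neg_gpdSurvival hσ hx (hscale x hx)
  have hnonneg : ∀ x ∈ Ioi μ, 0 ≤ gpdDensity μ σ ξ x := fun _ _ => gpdDensity_nonneg hσ
  have hlim := (tendsto_gpdSurvival_atTop (μ := μ) hσ hξ).neg
  rw [← setLIntegral_eq_of_support_subset support_ofReal_gpdDensity_subset_Ici,
    setLIntegral_congr Ioi_ae_eq_Ici.symm,
    ← ofReal_integral_eq_lintegral_ofReal (integrableOn_Ioi_deriv_of_nonneg' hderiv hnonneg hlim)
      (.of_forall fun _ => gpdDensity_nonneg hσ),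
    integral_Ioi_of_hasDerivAt_of_nonneg' hderiv hnonneg hlim, gpdSurvival_self]
  simp

theorem add_mul_sub_pos_iff_lt_endpoint (hξ : ξ < 0) :
    0 < σ + ξ * (x - μ) ↔ x < μ - σ / ξ := by
  rw [lt_sub_iff_add_lt, ← lt_sub_iff_add_lt', div_lt_iff_of_neg hξ]
  constructor <;> intro h <;> linarith

theorem support_ofReal_gpdDensity_subset_Icc (hσ : 0 < σ) (hξ : ξ < 0) :
    (fun x => ENNReal.ofReal (gpdDensity μ σ ξ x)).support ⊆ Icc μ (μ - σ / ξ) := by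
  intro x hx
  refine ⟨support_ofReal_gpdDensity_subset_Ici hx, le_of_lt ?_⟩
  contrapose! hx
  rw [← not_lt, ← add_mul_sub_pos_iff_lt_endpoint hξ, not_lt] at hx
  simp [gpdDensity_of_nonpos hσ hx]

theorem gpdSurvival_endpoint (hσ : σ ≠ 0) (hξ : ξ ≠ 0) :
    gpdSurvival μ σ ξ (μ - σ / ξ) = 0 := by
  have hbase : 1 + ξ * (μ - σ / ξ - μ) / σ = 0 := by
    field_simp
    ring
  rw [gpdSurvival, if_neg hξ, hbase, Real.zero_rpow (div_ne_zero (by norm_num) hξ)]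

theorem lintegral_gpdDensity_of_neg (hσ : 0 < σ) (hξ : ξ < 0) :
    ∫⁻ x, ENNReal.ofReal (gpdDensity μ σ ξ x) = 1 := by
  have hle : μ ≤ μ - σ / ξ := by linarith [div_neg_of_pos_of_neg hσ hξ]
  have hcont : ContinuousOn (fun t => -gpdSurvival μ σ ξ t) (Icc μ (μ - σ / ξ)) := by
    simp only [gpdSurvival, hξ.ne, if_false]
    refine (Continuous.rpow_const (by fun_prop) fun _ => Or.inr ?_).neg.continuousOn
    exact div_nonneg_of_nonpos (by norm_num) hξ.le
  have hderiv : ∀ x ∈ Ioo μ (μ - σ / ξ),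
      HasDerivAt (fun t => -gpdSurvival μ σ ξ t) (gpdDensity μ σ ξ x) x := fun x hx =>
    hasDerivAt_neg_gpdSurvival hσ hx.1.le ((add_mul_sub_pos_iff_lt_endpoint hξ).2 hx.2)
  have hint := intervalIntegral.integrableOn_deriv_of_nonneg hcont hderiv
    fun _ _ => gpdDensity_nonneg hσ
  rw [← setLIntegral_eq_of_support_subset (support_ofReal_gpdDensity_subset_Icc hσ hξ),
    setLIntegral_congr Ioc_ae_eq_Icc.symm,
    ← ofReal_integral_eq_lintegral_ofReal hint (.of_forall fun _ => gpdDensity_nonneg hσ),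
    ← intervalIntegral.integral_of_le hle,
    intervalIntegral.integral_eq_sub_of_hasDerivAt_of_le hle hcont hderiv
      ((intervalIntegrable_iff_integrableOn_Ioc_of_le hle).2 hint),
    gpdSurvival_self, gpdSurvival_endpoint hσ.ne' hξ.ne]
  simp

theorem lintegral_gpdDensity (hσ : 0 < σ) :
    ∫⁻ x, ENNReal.ofReal (gpdDensity μ σ ξ x) = 1 :=
  (le_or_gt 0 ξ).elim (lintegral_gpdDensity_of_nonneg hσ) (lintegral_gpdDensity_of_neg hσ)

end Normalization

/-- The likelihood of independent GPD observations `x`. -/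
noncomputable def gpdLikelihood {n : ℕ} (μ σ ξ : ℝ) (x : Fin n → ℝ) : ℝ :=
  ∏ i, gpdDensity μ σ ξ (x i)

/-- The marginal likelihood of GPD observations `x` with known location and tail parameter, under
the prior `1 / σ` on the scale. -/
noncomputable def scaleMarginal {n : ℕ} (μ ξ : ℝ) (x : Fin n → ℝ) : ENNReal :=
  ∫⁻ σ in Ioi (0 : ℝ), ENNReal.ofReal (1 / σ * gpdLikelihood μ σ ξ x)

/-- The marginal likelihood of GPD observations `x` with known tail parameter, under the prior
`1 / σ` on the location and scale. -/
noncomputable def locationScaleMarginal {n : ℕ} (ξ : ℝ) (x : Fin n → ℝ) : ENNReal :=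
  ∫⁻ σ in Ioi (0 : ℝ), ENNReal.ofReal (1 / σ) * ∫⁻ μ, ENNReal.ofReal (gpdLikelihood μ σ ξ x)

section Location

variable {n : ℕ} {μ σ ξ : ℝ}

@[fun_prop]
theorem measurable_gpdLikelihood {α : Type*} [MeasurableSpace α] {μ σ ξ : α → ℝ} {x : Fin n → ℝ}
    (hμ : Measurable μ) (hσ : Measurable σ) (hξ : Measurable ξ) :
    Measurable fun a => gpdLikelihood (μ a) (σ a) (ξ a) x := by
  unfold gpdLikelihood
  fun_prop

theorem gpdLikelihood_nonneg {x : Fin n → ℝ} (hσ : 0 < σ) : 0 ≤ gpdLikelihood μ σ ξ x :=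
  Finset.prod_nonneg fun _ _ => gpdDensity_nonneg hσ

theorem gpdLikelihood_eq_zero {x : Fin n → ℝ} {i : Fin n} (hi : gpdDensity μ σ ξ (x i) = 0) :
    gpdLikelihood μ σ ξ x = 0 :=
  Finset.prod_eq_zero (Finset.mem_univ i) hi

theorem one_div_mul_gpdLikelihood {x : Fin (n + 1) → ℝ} (hx : ∀ i, x 0 ≤ x i) (hσ : 0 < σ)
    (hμ : μ ≤ x 0) {s : ℝ} (hs : 0 < s) (hs_eq : s = σ + ξ * (x 0 - μ)) :
    1 / σ * gpdLikelihood μ σ ξ x =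
      1 / s * gpdLikelihood (x 0) s ξ (Fin.tail x) *
        (gpdDensity 0 (s / (n + 1 : ℕ)) (-ξ / (n + 1 : ℕ)) (x 0 - μ) / (n + 1 : ℕ)) := by
  have hscale : 0 < σ + ξ * (x 0 - μ) := hs_eq ▸ hs
  have hdual : s / (n + 1 : ℕ) + -ξ / (n + 1 : ℕ) * (x 0 - μ - 0) = σ / (n + 1 : ℕ) := by
    rw [hs_eq]
    ring
  have hexcess : gpdLikelihood μ σ ξ (Fin.tail x) =
      gpdSurvival μ σ ξ (x 0) ^ n * gpdLikelihood (x 0) s ξ (Fin.tail x) := by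
    rw [hs_eq, gpdLikelihood, gpdLikelihood, ← Fin.prod_const, ← Finset.prod_mul_distrib]
    exact Finset.prod_congr rfl fun i _ =>
      gpdDensity_eq_gpdSurvival_mul hσ hμ (hx i.succ) hscale
  have hsplit : gpdLikelihood μ σ ξ x =
      gpdDensity μ σ ξ (x 0) * gpdLikelihood μ σ ξ (Fin.tail x) := Fin.prod_univ_succ _
  rw [hsplit, hexcess, gpdDensity_eq_gpdSurvival_div hσ hμ hscale,
    gpdDensity_eq_gpdSurvival_div (by positivity) (sub_nonneg.2 hμ) (hdual ▸ by positivity),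
    hdual, hs_eq, ← gpdSurvival_pow hσ hscale n.succ_ne_zero,
    Nat.succ_eq_add_one, pow_succ]
  field_simp

theorem indicator_gpdLikelihood_sub {x : Fin (n + 1) → ℝ} (hx : ∀ i, x 0 ≤ x i) (s y : ℝ) :
    (Ioi 0).indicator (fun σ => ENNReal.ofReal (1 / σ * gpdLikelihood (x 0 - y) σ ξ x))
        (s - ξ * y) =
      (Ioi 0).indicator (fun s => ENNReal.ofReal (1 / s * gpdLikelihood (x 0) s ξ (Fin.tail x)) *
        (ENNReal.ofReal (gpdDensity 0 (s / (n + 1 : ℕ)) (-ξ / (n + 1 : ℕ)) y) /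
          (n + 1 : ℕ))) s := by
  have hn : (0 : ℝ) < (n + 1 : ℕ) := by positivity
  simp only [indicator_apply, mem_Ioi]
  rcases lt_or_ge y 0 with hy | hy
  · have hlt : x 0 < x 0 - y := by linarith
    simp [gpdDensity_of_lt hy, gpdLikelihood_eq_zero (gpdDensity_of_lt hlt)]
  rcases le_or_gt s 0 with hs | hs
  · rw [if_neg hs.not_gt]
    refine ite_eq_right_iff.2 fun hσ => ?_
    have hnonpos : s - ξ * y + ξ * (x 0 - (x 0 - y)) ≤ 0 := by linarith
    simp [gpdLikelihood_eq_zero (gpdDensity_of_nonpos hσ hnonpos)]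
  rw [if_pos hs]
  rcases le_or_gt (s - ξ * y) 0 with hσ | hσ
  · have hdual : s / (n + 1 : ℕ) + -ξ / (n + 1 : ℕ) * (y - 0) = (s - ξ * y) / (n + 1 : ℕ) := by
      ring
    rw [if_neg hσ.not_gt, gpdDensity_of_nonpos (by positivity)
      (hdual ▸ div_nonpos_of_nonpos_of_nonneg hσ hn.le)]
    simp
  · rw [if_pos hσ, one_div_mul_gpdLikelihood hx hσ (by linarith) hs (by ring), sub_sub_cancel,
      ENNReal.ofReal_mul (mul_nonneg (one_div_nonneg.2 hs.le) (gpdLikelihood_nonneg hs)),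
      ENNReal.ofReal_div_of_pos hn, ENNReal.ofReal_natCast]

theorem lintegral_lintegral_shear {F : ℝ → ℝ → ENNReal} (hF : Measurable (Function.uncurry F))
    (c : ℝ) : ∫⁻ s, ∫⁻ y, F (s - c * y) y = ∫⁻ σ, ∫⁻ y, F σ y := by
  have hshear : Measurable (Function.uncurry fun s y => F (s - c * y) y) :=
    hF.comp (by fun_prop : Measurable fun p : ℝ × ℝ => (p.1 - c * p.2, p.2))
  rw [lintegral_lintegral_swap hshear.aemeasurable, lintegral_lintegral_swap hF.aemeasurable]
  exact lintegral_congr fun y => lintegral_sub_right_eq_self (fun σ => F σ y) (c * y)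

theorem locationScaleMarginal_eq_scaleMarginal_div {x : Fin (n + 1) → ℝ} (hx : ∀ i, x 0 ≤ x i) :
    locationScaleMarginal ξ x = scaleMarginal (x 0) ξ (Fin.tail x) / (n + 1 : ℕ) := by
  set F : ℝ → ℝ → ENNReal := fun σ y =>
    (Ioi 0).indicator (fun σ => ENNReal.ofReal (1 / σ * gpdLikelihood (x 0 - y) σ ξ x)) σ with hF
  have hFm : Measurable (Function.uncurry F) := by
    have : Measurable (indicator {p : ℝ × ℝ | 0 < p.1} fun p =>
        ENNReal.ofReal (1 / p.1 * gpdLikelihood (x 0 - p.2) p.1 ξ x)) :=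
      Measurable.indicator (by fun_prop) (measurableSet_lt measurable_const measurable_fst)
    exact this
  calc locationScaleMarginal ξ x = ∫⁻ σ, ∫⁻ y, F σ y := by
        rw [locationScaleMarginal, ← lintegral_indicator measurableSet_Ioi]
        refine lintegral_congr fun σ => ?_
        by_cases hσ : σ ∈ Ioi 0
        · simp only [hF, indicator_of_mem hσ]
          rw [← lintegral_const_mul' _ _ ENNReal.ofReal_ne_top,
            ← lintegral_sub_left_eq_self _ (x 0)]
          simp only [ENNReal.ofReal_mul (one_div_nonneg.2 (le_of_lt hσ))]
        · simp [hF, indicator_of_notMem hσ]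
    _ = ∫⁻ s, ∫⁻ y, F (s - ξ * y) y := (lintegral_lintegral_shear hFm ξ).symm
    _ = ∫⁻ s, (Ioi 0).indicator (fun s =>
          ENNReal.ofReal (1 / s * gpdLikelihood (x 0) s ξ (Fin.tail x)) / (n + 1 : ℕ)) s := by
        refine lintegral_congr fun s => ?_
        simp only [hF, indicator_gpdLikelihood_sub hx]
        by_cases hs : s ∈ Ioi 0
        · have hs' : 0 < s / (n + 1 : ℕ) := div_pos hs (by positivity)
          simp only [indicator_of_mem hs, div_eq_mul_inv _ ((n + 1 : ℕ) : ENNReal)]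
          rw [lintegral_const_mul' _ _ ENNReal.ofReal_ne_top,
            lintegral_mul_const _ (by fun_prop), lintegral_gpdDensity hs', one_mul]
        · simp [indicator_of_notMem hs]
    _ = scaleMarginal (x 0) ξ (Fin.tail x) / (n + 1 : ℕ) := by
        simp only [lintegral_indicator measurableSet_Ioi, div_eq_mul_inv _ ((n + 1 : ℕ) : ENNReal)]
        rw [lintegral_mul_const _ (by fun_prop), scaleMarginal]

end Location

section Scale

variable {n : ℕ} {μ σ ξ x y : ℝ}

theorem gpdDensity_eq_inv_mul_standard (hσ : 0 < σ) :
    gpdDensity μ σ ξ x = σ⁻¹ * gpdDensity 0 1 ξ ((x - μ) / σ) := by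
  have hnonneg : 0 ≤ (x - μ) / σ ↔ μ ≤ x := by
    rw [le_div_iff₀ hσ, zero_mul, sub_nonneg]
  simp only [gpdDensity, hnonneg, sub_zero, div_one, mul_ite, mul_zero, one_div, one_mul,
    neg_div, mul_div_assoc]

theorem setLIntegral_Ioi_gpdDensity (hσ : 0 < σ) :
    ∫⁻ x in Ioi μ, ENNReal.ofReal (gpdDensity μ σ ξ x) = 1 := by
  rw [setLIntegral_congr Ioi_ae_eq_Ici,
    setLIntegral_eq_of_support_subset support_ofReal_gpdDensity_subset_Ici, lintegral_gpdDensity hσ]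

theorem image_const_div_Ioi {d : ℝ} (hd : 0 < d) : (fun σ => d / σ) '' Ioi 0 = Ioi 0 := by
  ext w
  refine ⟨?_, fun hw => ⟨d / w, div_pos hd hw, div_div_cancel₀ hd.ne'⟩⟩
  rintro ⟨σ, hσ, rfl⟩
  exact div_pos hd hσ

theorem lintegral_one_div_mul_gpdDensity (hμ : μ < x) :
    ∫⁻ σ in Ioi (0 : ℝ), ENNReal.ofReal (1 / σ * gpdDensity μ σ ξ x) =
      ENNReal.ofReal (x - μ)⁻¹ := by
  have hd : 0 < x - μ := sub_pos.2 hμ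
  have hderiv : ∀ σ ∈ Ioi (0 : ℝ),
      HasDerivWithinAt (fun σ => (x - μ) / σ) (-(x - μ) / σ ^ 2) (Ioi 0) σ := fun σ hσ => by
    simpa using ((hasDerivAt_const σ (x - μ)).fun_div (hasDerivAt_id σ)
      (ne_of_gt hσ)).hasDerivWithinAt
  have hinj : InjOn (fun σ => (x - μ) / σ) (Ioi 0) := fun σ _ τ _ h => by
    simpa [div_eq_mul_inv, hd.ne'] using h
  have hsubst := lintegral_image_eq_lintegral_abs_deriv_mul measurableSet_Ioi hderiv hinj
    fun w => ENNReal.ofReal (gpdDensity 0 1 ξ w)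
  rw [image_const_div_Ioi hd, setLIntegral_Ioi_gpdDensity one_pos] at hsubst
  rw [← mul_one (ENNReal.ofReal _), hsubst, ← lintegral_const_mul' _ _ ENNReal.ofReal_ne_top]
  refine setLIntegral_congr_fun measurableSet_Ioi fun σ (hσ : 0 < σ) => ?_
  rw [gpdDensity_eq_inv_mul_standard hσ, ← ENNReal.ofReal_mul (abs_nonneg _),
    ← ENNReal.ofReal_mul (inv_nonneg.2 hd.le), neg_div, abs_neg, abs_of_pos (by positivity)]
  congr 1
  field_simp

theorem scaleMarginal_le_of_gpdLikelihood_le {x : Fin n → ℝ} {C : ℝ} (hC : 0 ≤ C) (hy : μ < y)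
    (h : ∀ σ, 0 < σ → gpdLikelihood μ σ ξ x ≤ C * gpdDensity μ σ ξ y) :
    scaleMarginal μ ξ x ≤ ENNReal.ofReal (C / (y - μ)) := by
  rw [div_eq_mul_inv, ENNReal.ofReal_mul hC, ← lintegral_one_div_mul_gpdDensity (ξ := ξ) hy,
    ← lintegral_const_mul' _ _ ENNReal.ofReal_ne_top]
  refine setLIntegral_mono' measurableSet_Ioi fun σ (hσ : 0 < σ) => ?_
  rw [← ENNReal.ofReal_mul hC, mul_left_comm]
  exact ENNReal.ofReal_le_ofReal (mul_le_mul_of_nonneg_left (h σ hσ) (one_div_nonneg.2 hσ.le))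

theorem gpdLikelihood_pair : gpdLikelihood μ σ ξ ![x, y] =
    gpdDensity μ σ ξ x * gpdDensity μ σ ξ y := Fin.prod_univ_two _

theorem scaleMarginal_pair_le_of_neg_one_lt (hξ : -1 < ξ) (hx : μ < x) (hy : μ < y) :
    scaleMarginal μ ξ ![x, y] ≤ ENNReal.ofReal (((1 + ξ) * (x - μ))⁻¹ / (y - μ)) := by
  have hC : 0 ≤ ((1 + ξ) * (x - μ))⁻¹ := inv_nonneg.2 (mul_nonneg (by linarith) (by linarith))
  refine scaleMarginal_le_of_gpdLikelihood_le hC hy fun σ hσ => ?_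
  rw [gpdLikelihood_pair]
  exact mul_le_mul_of_nonneg_right (gpdDensity_le_inv_mul hσ hξ hx) (gpdDensity_nonneg hσ)

theorem scaleMarginal_pair_le_of_neg (hξ : ξ < 0) (hx : μ ≤ x) (hxy : x < y) :
    scaleMarginal μ ξ ![x, y] ≤ ENNReal.ofReal ((-ξ * (y - x))⁻¹ / (y - μ)) := by
  have hgap : 0 < -ξ * (y - x) := mul_pos (neg_pos.2 hξ) (sub_pos.2 hxy)
  refine scaleMarginal_le_of_gpdLikelihood_le (inv_nonneg.2 hgap.le) (hx.trans_lt hxy)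
    fun σ hσ => ?_
  rw [gpdLikelihood_pair]
  rcases le_or_gt (σ + ξ * (y - μ)) 0 with hout | hin
  · rw [gpdDensity_of_nonpos hσ hout, mul_zero, mul_zero]
  · have hscale : -ξ * (y - x) ≤ σ + ξ * (x - μ) := by linarith
    refine mul_le_mul_of_nonneg_right ?_ (gpdDensity_nonneg hσ)
    exact (gpdDensity_le_inv hσ hx (hgap.trans_le hscale)).trans (inv_anti₀ hgap hscale)

theorem scaleMarginal_pair_le (hx : μ < x) (hxy : x < y) :
    scaleMarginal μ ξ ![x, y] ≤
      ENNReal.ofReal (3 / ((x - μ) * (y - x)) * (1 + |ξ|)⁻¹) := by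
  have hxμ : 0 < x - μ := sub_pos.2 hx
  have hgap : 0 < y - x := sub_pos.2 hxy
  have hrhs : 3 / ((x - μ) * (y - x)) * (1 + |ξ|)⁻¹ =
      ((1 + |ξ|) / 3 * ((x - μ) * (y - x)))⁻¹ := by field_simp
  rw [hrhs]
  rcases le_or_gt (-(1 / 2)) ξ with hξ | hξ
  · have hpos : 0 < 1 + ξ := by linarith
    have hscale : (1 + |ξ|) / 3 ≤ 1 + ξ := by
      rcases abs_cases ξ with ⟨h, _⟩ | ⟨h, _⟩ <;> linarith
    refine (scaleMarginal_pair_le_of_neg_one_lt (by linarith) hx (hx.trans hxy)).trans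
      (ENNReal.ofReal_le_ofReal ?_)
    rw [div_eq_mul_inv, ← mul_inv, mul_assoc]
    gcongr
  · have hpos : 0 < -ξ := by linarith
    have hscale : (1 + |ξ|) / 3 ≤ -ξ := by
      rw [abs_of_neg (by linarith)]
      linarith
    refine (scaleMarginal_pair_le_of_neg (by linarith) hx.le hxy).trans
      (ENNReal.ofReal_le_ofReal ?_)
    rw [div_eq_mul_inv, ← mul_inv, mul_assoc, mul_comm (x - μ)]
    gcongr

theorem scaleMarginal_pos {x : Fin n → ℝ} (hξ : 0 ≤ ξ) (hx : ∀ i, μ ≤ x i) :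
    0 < scaleMarginal μ ξ x := by
  rw [scaleMarginal, setLIntegral_pos_iff (by fun_prop)]
  have hsupp : Ioi 0 ⊆ (fun σ => ENNReal.ofReal (1 / σ * gpdLikelihood μ σ ξ x)).support := by
    intro σ (hσ : 0 < σ)
    have hpos : 0 < gpdLikelihood μ σ ξ x := Finset.prod_pos fun i _ =>
      gpdDensity_pos hσ (hx i)
        (add_pos_of_pos_of_nonneg hσ (mul_nonneg hξ (sub_nonneg.2 (hx i))))
    exact (ENNReal.ofReal_pos.2 (mul_pos (one_div_pos.2 hσ) hpos)).ne'
  rw [inter_eq_right.2 hsupp]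
  simp

end Scale

section TailParameter

variable {n : ℕ} {ξ : ℝ}

@[fun_prop]
theorem measurable_locationScaleMarginal {x : Fin n → ℝ} :
    Measurable fun ξ => locationScaleMarginal ξ x := by
  unfold locationScaleMarginal
  fun_prop

theorem locationScaleMarginal_pos {x : Fin (n + 1) → ℝ} (hξ : 0 ≤ ξ) (hx : ∀ i, x 0 ≤ x i) :
    0 < locationScaleMarginal ξ x := by
  rw [locationScaleMarginal_eq_scaleMarginal_div hx]
  exact ENNReal.div_pos (scaleMarginal_pos hξ fun i => hx i.succ).ne' (ENNReal.natCast_ne_top _)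

theorem locationScaleMarginal_le {x : Fin 3 → ℝ} (hx : StrictMono x) :
    locationScaleMarginal ξ x ≤
      ENNReal.ofReal (1 / ((x 1 - x 0) * (x 2 - x 1))) * ENNReal.ofReal (1 + |ξ|)⁻¹ := by
  have h01 : x 0 < x 1 := hx (by decide)
  have h12 : x 1 < x 2 := hx (by decide)
  have htail : Fin.tail x = ![x 1, x 2] := funext (Fin.forall_fin_two.2 ⟨rfl, rfl⟩)
  have hC : 0 ≤ 1 / ((x 1 - x 0) * (x 2 - x 1)) :=
    one_div_nonneg.2 (mul_nonneg (sub_pos.2 h01).le (sub_pos.2 h12).le)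
  calc locationScaleMarginal ξ x
      = scaleMarginal (x 0) ξ ![x 1, x 2] / (2 + 1 : ℕ) :=
        htail ▸ locationScaleMarginal_eq_scaleMarginal_div fun i => hx.monotone (Fin.zero_le i)
    _ ≤ ENNReal.ofReal (3 / ((x 1 - x 0) * (x 2 - x 1)) * (1 + |ξ|)⁻¹) / (2 + 1 : ℕ) :=
        ENNReal.div_le_div_right (scaleMarginal_pair_le h01 h12) _
    _ = ENNReal.ofReal (1 / ((x 1 - x 0) * (x 2 - x 1))) * ENNReal.ofReal (1 + |ξ|)⁻¹ := by
        rw [← ENNReal.ofReal_natCast, ← ENNReal.ofReal_div_of_pos (by positivity),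
          ← ENNReal.ofReal_mul hC]
        congr 1
        push_cast
        ring

theorem lintegral_mul_locationScaleMarginal_pos {π : ℝ → ENNReal} (hπ : Measurable π)
    (hpos : ∀ ξ, 0 < ξ → 0 < π ξ) {x : Fin (n + 1) → ℝ} (hx : ∀ i, x 0 ≤ x i) :
    0 < ∫⁻ ξ, π ξ * locationScaleMarginal ξ x := by
  rw [lintegral_pos_iff_support (by fun_prop)]
  have hsupp : Ioi 0 ⊆ (fun ξ => π ξ * locationScaleMarginal ξ x).support := fun ξ hξ =>
    mul_ne_zero (hpos ξ hξ).ne' (locationScaleMarginal_pos (le_of_lt hξ) hx).ne'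
  exact lt_of_lt_of_le (by simp) (measure_mono hsupp)

theorem lintegral_mul_locationScaleMarginal_lt_top {π : ℝ → ENNReal}
    (hπ : ∫⁻ ξ, π ξ * ENNReal.ofReal (1 + |ξ|)⁻¹ < ⊤) {x : Fin 3 → ℝ} (hx : StrictMono x) :
    ∫⁻ ξ, π ξ * locationScaleMarginal ξ x < ⊤ := by
  calc ∫⁻ ξ, π ξ * locationScaleMarginal ξ x
      ≤ ∫⁻ ξ, ENNReal.ofReal (1 / ((x 1 - x 0) * (x 2 - x 1))) *
          (π ξ * ENNReal.ofReal (1 + |ξ|)⁻¹) := lintegral_mono fun ξ => by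
        rw [mul_left_comm]
        exact mul_le_mul_right (locationScaleMarginal_le hx) _
    _ < ⊤ := by
        rw [lintegral_const_mul' _ _ ENNReal.ofReal_ne_top]
        exact ENNReal.mul_lt_top ENNReal.ofReal_lt_top hπ

theorem lintegral_asinh_prior_mul_inv_lt_top :
    ∫⁻ ξ : ℝ, ENNReal.ofReal (1 / √(1 + ξ ^ 2)) * ENNReal.ofReal (1 + |ξ|)⁻¹ < ⊤ := by
  refine lt_of_le_of_lt (lintegral_mono fun ξ => ?_) integrable_inv_one_add_sq.lintegral_lt_top
  have hsqrt : √(1 + ξ ^ 2) ≤ 1 + |ξ| := by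
    rw [Real.sqrt_le_left (by positivity)]
    nlinarith [abs_nonneg ξ, sq_abs ξ]
  rw [← ENNReal.ofReal_mul (by positivity), one_div, ← mul_inv]
  refine ENNReal.ofReal_le_ofReal (inv_anti₀ (by positivity) ?_)
  nth_rewrite 1 [← Real.mul_self_sqrt (show 0 ≤ 1 + ξ ^ 2 by positivity)]
  gcongr

end TailParameter

/-- For three distinct GPD observations, the marginal likelihood under the improper prior
`Π₀(μ, σ, ξ) = (1/σ)·(1 + ξ²)^{-1/2}` (uniform in `ψ = asinh ξ`) is finite and strictly
positive, i.e. the posterior on `(μ, σ, ξ)` is proper. -/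
theorem gpd_posterior_proper_asinh_prior
    (x₁ x₂ x₃ : ℝ) (h12 : x₁ < x₂) (h23 : x₂ < x₃) :
    0 < ∫⁻ ξ : ℝ, ENNReal.ofReal (1 / Real.sqrt (1 + ξ ^ 2)) *
          ∫⁻ σ in Ioi (0 : ℝ), ENNReal.ofReal (1 / σ) *
            ∫⁻ μ : ℝ, ENNReal.ofReal
              (gpdDensity μ σ ξ x₁ * gpdDensity μ σ ξ x₂ * gpdDensity μ σ ξ x₃) ∧
    (∫⁻ ξ : ℝ, ENNReal.ofReal (1 / Real.sqrt (1 + ξ ^ 2)) *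
          ∫⁻ σ in Ioi (0 : ℝ), ENNReal.ofReal (1 / σ) *
            ∫⁻ μ : ℝ, ENNReal.ofReal
              (gpdDensity μ σ ξ x₁ * gpdDensity μ σ ξ x₂ * gpdDensity μ σ ξ x₃)) < ⊤ := by
  have hmarginal : ∀ ξ, (∫⁻ σ in Ioi (0 : ℝ), ENNReal.ofReal (1 / σ) *
      ∫⁻ μ : ℝ, ENNReal.ofReal
        (gpdDensity μ σ ξ x₁ * gpdDensity μ σ ξ x₂ * gpdDensity μ σ ξ x₃)) =
      locationScaleMarginal ξ ![x₁, x₂, x₃] := fun ξ => by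
    simp [locationScaleMarginal, gpdLikelihood, Fin.prod_univ_three]
  have hmono : StrictMono ![x₁, x₂, x₃] := by
    simp [Fin.strictMono_iff_lt_succ, Fin.forall_fin_two, h12, h23]
  simp only [hmarginal]
  constructor
  · refine lintegral_mul_locationScaleMarginal_pos (by fun_prop) (fun ξ _ => ?_)
      fun i => hmono.monotone (Fin.zero_le i)
    exact ENNReal.ofReal_pos.2 (by positivity)
  · exact lintegral_mul_locationScaleMarginal_lt_top lintegral_asinh_prior_mul_inv_lt_top hmono
end

section
/- Let x₁ < x₂ < x₃ be three distinct real numbers. Then the marginal likelihood integral for a sample of size N = 3 from the Generalised Pareto family under the improper prior Π₀(μ, σ, ξ) = 1/σ that is uniform in ξ diverges: ∫_ℝ ∫₀^∞ σ^{−1} ∫_ℝ ∏_{i=1}^{3} f_{μ,σ,ξ}(x_i) dμ dσ dξ = ∞. In other words, an improper prior uniform on the tail parameter ξ (combined with the 1/σ prior on location–scale) leads to an improper posterior in the N = 3 GPD case. -/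
open MeasureTheory Set

/-!
The divergence comes from `ξ = -k → -∞`. There the density is supported below the endpoint
`e = μ + σ / k` and equals `k⁻¹ (σ / k) ^ (-1 / k) (e - x) ^ (1 / k - 1)`. Let `N` be the sample
size, `m` the largest observation, and restrict to `0 < e - m ≤ 1` and `σ / k > T`, where `T ≥ 1`
bounds the distance from `e` to all observations. The likelihood is then at least a constant times
`k ^ (-N) (σ / k) ^ (-N / k) (e - m) ^ (1 / k - 1)`. Both integrating out `e` and integrating out
`σ` against `dσ / σ` gain a factor of order `k`, so what remains is of order at least `k ^ (2 - N)`,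
which is not integrable at infinity when `N ≤ 3`.
-/

lemma lintegral_Ioc_rpow_sub_one {r : ℝ} (hr : 0 < r) :
    ∫⁻ s in Ioc (0 : ℝ) 1, ENNReal.ofReal (s ^ (r - 1)) = ENNReal.ofReal r⁻¹ := by
  have integrable : IntegrableOn (fun s : ℝ ↦ s ^ (r - 1)) (Ioc 0 1) :=
    (intervalIntegrable_iff_integrableOn_Ioc_of_le zero_le_one).1
      (intervalIntegral.intervalIntegrable_rpow' (by linarith))
  have nonneg : 0 ≤ᵐ[volume.restrict (Ioc 0 1)] fun s : ℝ ↦ s ^ (r - 1) := by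
    filter_upwards [ae_restrict_mem measurableSet_Ioc] with s hs
    exact Real.rpow_nonneg hs.1.le _
  rw [← ofReal_integral_eq_lintegral_ofReal integrable nonneg,
    ← intervalIntegral.integral_of_le zero_le_one, integral_rpow (Or.inl (by linarith)),
    sub_add_cancel, Real.one_rpow, Real.zero_rpow hr.ne', sub_zero, one_div]

lemma lintegral_Ioi_rpow_neg_sub_one {p a : ℝ} (hp : 0 < p) (ha : 0 < a) :
    ∫⁻ t in Ioi a, ENNReal.ofReal (t ^ (-p - 1)) = ENNReal.ofReal (a ^ (-p) / p) := by
  have nonneg : 0 ≤ᵐ[volume.restrict (Ioi a)] fun t : ℝ ↦ t ^ (-p - 1) := by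
    filter_upwards [ae_restrict_mem measurableSet_Ioi] with t ht
    exact Real.rpow_nonneg (ha.trans ht).le _
  rw [← ofReal_integral_eq_lintegral_ofReal (integrableOn_Ioi_rpow_of_lt (by linarith) ha) nonneg,
    integral_Ioi_rpow_of_lt (by linarith) ha, sub_add_cancel, neg_div_neg_eq]

lemma lintegral_Ioi_inv_mul_div_rpow_neg {k p a : ℝ} (hk : 0 < k) (hp : 0 < p) (ha : 0 < a) :
    ∫⁻ t in Ioi (k * a), ENNReal.ofReal (t⁻¹ * (t / k) ^ (-p)) =
      ENNReal.ofReal (a ^ (-p) / p) := by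
  have pull_out_scale : ∀ t ∈ Ioi (k * a), ENNReal.ofReal (t⁻¹ * (t / k) ^ (-p)) =
      ENNReal.ofReal (k ^ p) * ENNReal.ofReal (t ^ (-p - 1)) := by
    intro t ht
    have ht0 : 0 < t := (mul_pos hk ha).trans ht
    rw [← ENNReal.ofReal_mul (by positivity), Real.rpow_sub_one ht0.ne',
      Real.div_rpow ht0.le hk.le, Real.rpow_neg hk.le]
    congr 1
    field_simp
  rw [setLIntegral_congr_fun measurableSet_Ioi pull_out_scale,
    lintegral_const_mul' _ _ ENNReal.ofReal_ne_top,
    lintegral_Ioi_rpow_neg_sub_one hp (mul_pos hk ha), ← ENNReal.ofReal_mul (by positivity),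
    Real.mul_rpow hk.le ha.le, Real.rpow_neg hk.le]
  congr 1
  field_simp

lemma lintegral_Ioi_inv_eq_top {a : ℝ} (ha : 0 ≤ a) :
    ∫⁻ t in Ioi a, ENNReal.ofReal t⁻¹ = ⊤ := by
  have nonneg : 0 ≤ᵐ[volume.restrict (Ioi a)] fun t : ℝ ↦ t⁻¹ := by
    filter_upwards [ae_restrict_mem measurableSet_Ioi] with t ht
    exact inv_nonneg.2 (ha.trans ht.le)
  by_contra h
  exact not_integrableOn_Ioi_inv ⟨measurable_inv.aestronglyMeasurable,
    (hasFiniteIntegral_iff_ofReal nonneg).2 (lt_top_iff_ne_top.2 h)⟩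

lemma inv_pow_le_rpow_neg_mul_inv {t k : ℝ} (ht : 1 ≤ t) (hk : 1 ≤ k) (n : ℕ) :
    t⁻¹ ^ n ≤ t ^ (-(n * k⁻¹)) := by
  rw [inv_pow, ← Real.rpow_natCast, ← Real.rpow_neg (zero_le_one.trans ht)]
  gcongr
  exact mul_le_of_le_one_right n.cast_nonneg (inv_le_one_of_one_le₀ hk)

lemma inv_le_inv_pow_mul_sq {k : ℝ} (hk : 1 ≤ k) {n : ℕ} (hn : n ≤ 3) :
    k⁻¹ ≤ k⁻¹ ^ n * k ^ 2 :=
  calc k⁻¹ = k⁻¹ ^ 3 * k ^ 2 := by field_simp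
    _ ≤ k⁻¹ ^ n * k ^ 2 := by
      gcongr ?_ * _
      exact pow_le_pow_of_le_one (by positivity) (inv_le_one_of_one_le₀ hk) hn

lemma gpdDensity_neg_eq {μ σ k x : ℝ} (hk : 0 < k) (hσ : 0 < σ) (hμ : μ ≤ x)
    (hx : x < μ + σ / k) :
    gpdDensity μ σ (-k) x =
      k⁻¹ * (σ / k) ^ (-k⁻¹) * (μ + σ / k - x) ^ (k⁻¹ - 1) := by
  have base_eq : 1 + -k * (x - μ) / σ = (μ + σ / k - x) / (σ / k) := by
    field_simp
    ring
  have exponent_eq : -1 / -k - 1 = k⁻¹ - 1 := by rw [neg_div_neg_eq, one_div]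
  have gap_pos : 0 < μ + σ / k - x := sub_pos.2 hx
  rw [gpdDensity, if_neg (neg_ne_zero.2 hk.ne'), base_eq, exponent_eq,
    if_pos ⟨hμ, by positivity⟩, Real.rpow_eq_pow, Real.div_rpow gap_pos.le (by positivity),
    Real.rpow_sub_one (div_pos hσ hk).ne', Real.rpow_neg (by positivity)]
  field_simp

section Sample

variable {ι : Type*} [Fintype ι] {x : ι → ℝ} {j : ι} {k σ μ T : ℝ}

lemma inv_pow_mul_rpow_le_prod_rpow {y : ι → ℝ} {r : ℝ} (hr : r ∈ Icc (-1) 0) (hT : 1 ≤ T)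
    (hy : ∀ i, y i ∈ Ioc 0 T) (j : ι) :
    T⁻¹ ^ (Fintype.card ι - 1) * y j ^ r ≤ ∏ i, y i ^ r := by
  classical
  have factor_ge : ∀ i, T⁻¹ ≤ y i ^ r := fun i ↦
    calc T⁻¹ = T ^ (-1 : ℝ) := (Real.rpow_neg_one T).symm
      _ ≤ T ^ r := Real.rpow_le_rpow_of_exponent_le hT hr.1
      _ ≤ y i ^ r := Real.rpow_le_rpow_of_nonpos (hy i).1 (hy i).2 hr.2
  calc T⁻¹ ^ (Fintype.card ι - 1) * y j ^ r
      = (∏ _i ∈ Finset.univ.erase j, T⁻¹) * y j ^ r := by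
        rw [Finset.prod_const, Finset.card_erase_of_mem (Finset.mem_univ j), Finset.card_univ]
    _ ≤ (∏ i ∈ Finset.univ.erase j, y i ^ r) * y j ^ r := by
        have := Real.rpow_nonneg (hy j).1.le r
        gcongr with i
        exact factor_ge i
    _ = ∏ i, y i ^ r := Finset.prod_erase_mul _ _ (Finset.mem_univ j)

lemma le_prod_gpdDensity (hmax : ∀ i, x i ≤ x j) (hT : ∀ i, x j - x i + 1 ≤ T) (hk : 1 ≤ k)
    (hσ : k * T ≤ σ) (hμ : μ + σ / k - x j ∈ Ioc 0 1) :
    T⁻¹ ^ (Fintype.card ι - 1) * (k⁻¹ * (σ / k) ^ (-k⁻¹)) ^ Fintype.card ι *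
        (μ + σ / k - x j) ^ (k⁻¹ - 1) ≤
      ∏ i, gpdDensity μ σ (-k) (x i) := by
  have hk0 : 0 < k := by linarith
  have hT1 : 1 ≤ T := by linarith [hT j]
  have hσ0 : 0 < σ := lt_of_lt_of_le (by positivity) hσ
  have hσT : T ≤ σ / k := (le_div_iff₀' hk0).2 hσ
  have gap_mem : ∀ i, μ + σ / k - x i ∈ Ioc 0 T := fun i ↦
    ⟨by linarith [hμ.1, hmax i], by linarith [hμ.2, hT i]⟩
  have exponent_mem : k⁻¹ - 1 ∈ Icc (-1 : ℝ) 0 :=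
    ⟨by linarith [inv_pos.2 hk0], by linarith [inv_le_one_of_one_le₀ hk]⟩
  have density_eq : ∀ i, gpdDensity μ σ (-k) (x i) =
      k⁻¹ * (σ / k) ^ (-k⁻¹) * (μ + σ / k - x i) ^ (k⁻¹ - 1) := fun i ↦
    gpdDensity_neg_eq hk0 hσ0 (by linarith [(gap_mem i).2]) (by linarith [(gap_mem i).1])
  rw [Finset.prod_congr rfl fun i _ ↦ density_eq i, Finset.prod_mul_distrib, Finset.prod_const,
    Finset.card_univ, mul_right_comm, mul_comm]
  gcongr
  exact inv_pow_mul_rpow_le_prod_rpow exponent_mem hT1 gap_mem j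

lemma le_lintegral_prod_gpdDensity (hmax : ∀ i, x i ≤ x j) (hT : ∀ i, x j - x i + 1 ≤ T)
    (hk : 1 ≤ k) (hσ : k * T ≤ σ) :
    ENNReal.ofReal
        (T⁻¹ ^ (Fintype.card ι - 1) * (k⁻¹ * (σ / k) ^ (-k⁻¹)) ^ Fintype.card ι * k) ≤
      ∫⁻ μ : ℝ, ENNReal.ofReal (∏ i, gpdDensity μ σ (-k) (x i)) := by
  have hk0 : 0 < k := by linarith
  have hT0 : 0 < T := by linarith [hT j]
  have hσ0 : 0 < σ := lt_of_lt_of_le (by positivity) hσ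
  set c := T⁻¹ ^ (Fintype.card ι - 1) * (k⁻¹ * (σ / k) ^ (-k⁻¹)) ^ Fintype.card ι
  have hc : 0 ≤ c := by positivity
  calc ENNReal.ofReal (c * k)
      = ∫⁻ s in Ioc (0 : ℝ) 1, ENNReal.ofReal (c * s ^ (k⁻¹ - 1)) := by
        simp_rw [ENNReal.ofReal_mul hc]
        rw [lintegral_const_mul' _ _ ENNReal.ofReal_ne_top,
          lintegral_Ioc_rpow_sub_one (inv_pos.2 hk0), inv_inv]
    _ ≤ ∫⁻ s in Ioc (0 : ℝ) 1,
          ENNReal.ofReal (∏ i, gpdDensity (s + (x j - σ / k)) σ (-k) (x i)) := by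
        refine setLIntegral_mono' measurableSet_Ioc fun s hs ↦ ENNReal.ofReal_le_ofReal ?_
        have gap_eq : s + (x j - σ / k) + σ / k - x j = s := by ring
        have bound := le_prod_gpdDensity hmax hT hk hσ (gap_eq.symm ▸ hs)
        rwa [gap_eq] at bound
    _ ≤ ∫⁻ s : ℝ, ENNReal.ofReal (∏ i, gpdDensity (s + (x j - σ / k)) σ (-k) (x i)) :=
        setLIntegral_le_lintegral _ _
    _ = ∫⁻ μ : ℝ, ENNReal.ofReal (∏ i, gpdDensity μ σ (-k) (x i)) :=
        lintegral_add_right_eq_self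
          (fun μ ↦ ENNReal.ofReal (∏ i, gpdDensity μ σ (-k) (x i))) (x j - σ / k)

lemma le_lintegral_inv_mul_lintegral_prod_gpdDensity (hmax : ∀ i, x i ≤ x j)
    (hT : ∀ i, x j - x i + 1 ≤ T) (hk : 1 ≤ k) :
    ENNReal.ofReal (T⁻¹ ^ (Fintype.card ι - 1) * T⁻¹ ^ Fintype.card ι / Fintype.card ι *
        (k⁻¹ ^ Fintype.card ι * k ^ 2)) ≤
      ∫⁻ σ in Ioi (0 : ℝ), ENNReal.ofReal (1 / σ) *
        ∫⁻ μ : ℝ, ENNReal.ofReal (∏ i, gpdDensity μ σ (-k) (x i)) := by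
  have hk0 : 0 < k := by linarith
  have hT1 : 1 ≤ T := by linarith [hT j]
  have hT0 : 0 < T := by linarith
  have : Nonempty ι := ⟨j⟩
  have hN : 0 < (Fintype.card ι : ℝ) := Nat.cast_pos.2 Fintype.card_pos
  set N := Fintype.card ι with N_def
  set c := T⁻¹ ^ (N - 1) * k⁻¹ ^ N * k with c_def
  have hc : 0 ≤ c := by positivity
  calc ENNReal.ofReal (T⁻¹ ^ (N - 1) * T⁻¹ ^ N / N * (k⁻¹ ^ N * k ^ 2))
      = ENNReal.ofReal (c * (T⁻¹ ^ N / (N * k⁻¹))) := by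
        rw [c_def]
        congr 1
        field_simp
    _ ≤ ENNReal.ofReal (c * (T ^ (-(N * k⁻¹)) / (N * k⁻¹))) := by
        gcongr
        exact inv_pow_le_rpow_neg_mul_inv hT1 hk N
    _ = ∫⁻ σ in Ioi (k * T), ENNReal.ofReal (c * (σ⁻¹ * (σ / k) ^ (-(N * k⁻¹)))) := by
        simp_rw [ENNReal.ofReal_mul hc]
        rw [lintegral_const_mul' _ _ ENNReal.ofReal_ne_top,
          lintegral_Ioi_inv_mul_div_rpow_neg hk0 (mul_pos hN (inv_pos.2 hk0)) hT0]
    _ ≤ ∫⁻ σ in Ioi (k * T), ENNReal.ofReal (1 / σ) *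
          ∫⁻ μ : ℝ, ENNReal.ofReal (∏ i, gpdDensity μ σ (-k) (x i)) := by
        refine setLIntegral_mono' measurableSet_Ioi fun σ hσ ↦ ?_
        have hσ0 : 0 < σ := (mul_pos hk0 hT0).trans hσ
        refine le_of_eq_of_le ?_
          (mul_le_mul_right (le_lintegral_prod_gpdDensity hmax hT hk hσ.le) _)
        rw [← ENNReal.ofReal_mul (by positivity), mul_pow, ← Real.rpow_mul_natCast (by positivity),
          c_def, ← N_def]
        ring_nf
    _ ≤ _ := lintegral_mono_set (Ioi_subset_Ioi (by positivity))

theorem gpd_posterior_improper_uniform_xi_prior_general [Nonempty ι]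
    (hcard : Fintype.card ι ≤ 3) (x : ι → ℝ) :
    (∫⁻ ξ : ℝ, ∫⁻ σ in Ioi (0 : ℝ), ENNReal.ofReal (1 / σ) *
        ∫⁻ μ : ℝ, ENNReal.ofReal (∏ i, gpdDensity μ σ ξ (x i))) = ⊤ := by
  obtain ⟨j, hmax⟩ := Finite.exists_max x
  obtain ⟨l, hmin⟩ := Finite.exists_min x
  set T := x j - x l + 1
  have hT : ∀ i, x j - x i + 1 ≤ T := fun i ↦ by linarith [hmin i]
  have hT0 : 0 < T := by linarith [hT j]
  set N := Fintype.card ι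
  have hN : 0 < (N : ℝ) := Nat.cast_pos.2 Fintype.card_pos
  set c := T⁻¹ ^ (N - 1) * T⁻¹ ^ N / N
  have hc : 0 < c := div_pos (by positivity) hN
  rw [eq_top_iff, ← lintegral_neg_eq_self]
  calc ⊤ = ∫⁻ k in Ioi (1 : ℝ), ENNReal.ofReal (c * k⁻¹) := by
        simp_rw [ENNReal.ofReal_mul hc.le]
        rw [lintegral_const_mul' _ _ ENNReal.ofReal_ne_top, lintegral_Ioi_inv_eq_top zero_le_one,
          ENNReal.mul_top (ENNReal.ofReal_pos.2 hc).ne']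
    _ ≤ ∫⁻ k in Ioi (1 : ℝ), ∫⁻ σ in Ioi (0 : ℝ), ENNReal.ofReal (1 / σ) *
          ∫⁻ μ : ℝ, ENNReal.ofReal (∏ i, gpdDensity μ σ (-k) (x i)) := by
        refine setLIntegral_mono' measurableSet_Ioi fun k (hk : 1 < k) ↦ ?_
        refine le_trans ?_ (le_lintegral_inv_mul_lintegral_prod_gpdDensity hmax hT hk.le)
        gcongr
        exact inv_le_inv_pow_mul_sq hk.le hcard
    _ ≤ _ := setLIntegral_le_lintegral _ _

end Sample

/-- For three distinct GPD observations, the marginal likelihood under the improper prior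
`Π₀(μ, σ, ξ) = 1/σ`, uniform in the tail parameter `ξ`, diverges: the posterior on
`(μ, σ, ξ)` is improper in the `N = 3` GPD case. -/
theorem gpd_posterior_improper_uniform_xi_prior
    (x₁ x₂ x₃ : ℝ) (h12 : x₁ < x₂) (h23 : x₂ < x₃) :
    (∫⁻ ξ : ℝ, ∫⁻ σ in Ioi (0 : ℝ), ENNReal.ofReal (1 / σ) *
        ∫⁻ μ : ℝ, ENNReal.ofReal
          (gpdDensity μ σ ξ x₁ * gpdDensity μ σ ξ x₂ * gpdDensity μ σ ξ x₃)) = ⊤ := by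
  simpa [Fin.prod_univ_three] using
    gpd_posterior_improper_uniform_xi_prior_general (by simp) ![x₁, x₂, x₃]
end
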